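/- arXiv:2306.03698 — 5 statements merged into one kernel-verified Lean document; each statement's English description precedes it below -/
import Mathlib

section
/- For every h ∈ ℕ, the inductively defined unbalanced Wasserstein metric W^h is a well-defined metric on the iterated-degree-measure space M_h that metrizes the (weak) topology of M_h, and the Wasserstein metric δW^h on Borel probability measures over the metric space (M_h, W^h) is a well-defined metric that metrizes the weak topology on P(M_h). -/
open MeasureTheory Set

noncomputable section

/-- Borel measures of total mass at most one on `X`. -/
abbrev SubProb (X : Type) [MeasurableSpace X] : Type :=
  {μ : Measure X // μ Set.univ ≤ 1}

/-- The weak topology on `SubProb X`: the coarsest topology making all maps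
`μ ↦ ∫ f dμ` for bounded continuous `f` continuous. -/
def subProbWeakTop (X : Type) [MeasurableSpace X] [TopologicalSpace X] :
    TopologicalSpace (SubProb X) :=
  ⨅ f : BoundedContinuousFunction X ℝ,
    TopologicalSpace.induced (fun μ => ∫ x, f x ∂μ.val) inferInstance

/-- Iterated degree measure spaces with their (weak) topologies. -/
def IDM : ℕ → Σ X : Type, TopologicalSpace X
  | 0 => ⟨Unit, inferInstance⟩
  | (h+1) =>
      let p := IDM h
      ⟨@SubProb p.1 (@borel p.1 p.2), @subProbWeakTop p.1 (@borel p.1 p.2) p.2⟩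

/-- The space of iterated degree measures of depth `h`. -/
def M (h : ℕ) : Type := (IDM h).1

instance (h : ℕ) : TopologicalSpace (M h) := (IDM h).2
instance (h : ℕ) : MeasurableSpace (M h) := borel (M h)
instance (h : ℕ) : BorelSpace (M h) := ⟨rfl⟩

def toSub {h : ℕ} (α : M (h+1)) : SubProb (M h) := α
def ofSub {h : ℕ} (μ : SubProb (M h)) : M (h+1) := μ
/-- The underlying measure of an iterated degree measure. -/
def toMeas {h : ℕ} (α : M (h+1)) : Measure (M h) := (toSub α).1

/-- `d` satisfies the axioms of a metric. -/
def IsMetric {X : Type _} (d : X → X → ℝ) : Prop :=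
  (∀ x y, 0 ≤ d x y) ∧ (∀ x y, d x y = d y x) ∧
    (∀ x y, d x y = 0 ↔ x = y) ∧ (∀ x y z, d x z ≤ d x y + d y z)

/-- The topology generated by the open balls of a distance function `d`. -/
def ballTop {X : Type _} (d : X → X → ℝ) : TopologicalSpace X :=
  TopologicalSpace.generateFrom {U | ∃ x r, 0 < r ∧ U = {y | d x y < r}}

def uwAux {X : Type _} [MeasurableSpace X] (d : X → X → ℝ) (μ ν : Measure X) : ℝ :=
  (μ Set.univ).toReal - (ν Set.univ).toReal +
    sInf {r : ℝ | ∃ γ : Measure (X × X), γ Set.univ ≤ 1 ∧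
      γ.map Prod.fst ≤ μ ∧ γ.map Prod.snd = ν ∧ r = ∫ p, d p.1 p.2 ∂γ}

open Classical in
/-- The unbalanced Wasserstein distance w.r.t. a distance function `d`:
`‖μ‖ - ‖ν‖` plus the optimal transport cost over sub-couplings, where w.l.o.g.
`‖μ‖ ≥ ‖ν‖`. -/
def uwDist {X : Type _} [MeasurableSpace X] (d : X → X → ℝ) (μ ν : Measure X) : ℝ :=
  if ν Set.univ ≤ μ Set.univ then uwAux d μ ν else uwAux d ν μ

/-- The classical Wasserstein distance (over couplings) w.r.t. a cost `d`. -/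
def wassersteinDist {X : Type _} [MeasurableSpace X] (d : X → X → ℝ)
    (μ ν : Measure X) : ℝ :=
  sInf {r : ℝ | ∃ γ : Measure (X × X),
    γ.map Prod.fst = μ ∧ γ.map Prod.snd = ν ∧ r = ∫ p, d p.1 p.2 ∂γ}

/-- The iterated unbalanced Wasserstein metrics `W^h` on the spaces `M h`. -/
def Wdist : (h : ℕ) → M h → M h → ℝ
  | 0, _, _ => 0
  | (h+1), α, β => uwDist (Wdist h) (toMeas α) (toMeas β)

/-- Borel probability measures on `X`. -/
abbrev ProbM (X : Type) [MeasurableSpace X] : Type :=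
  {μ : Measure X // IsProbabilityMeasure μ}

/-- The weak topology on Borel probability measures. -/
def probWeakTop (X : Type) [MeasurableSpace X] [TopologicalSpace X] :
    TopologicalSpace (ProbM X) :=
  ⨅ f : BoundedContinuousFunction X ℝ,
    TopologicalSpace.induced (fun μ => ∫ x, f x ∂μ.val) inferInstance

set_option linter.unusedSectionVars false
open scoped ENNReal
open Filter Topology

section UW
variable {X : Type} [MetricSpace X] [MeasurableSpace X] [BorelSpace X]
  [SecondCountableTopology X]

/-- partial couplings with cost at most `c` -/
def Bd (μ ν : Measure X) (c : ℝ≥0∞) : Prop :=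
  ∃ γ : Measure (X × X), γ.map Prod.fst ≤ μ ∧ γ.map Prod.snd ≤ ν ∧
    ∫⁻ p, edist p.1 p.2 ∂γ + max (μ univ) (ν univ) ≤ c + γ univ

lemma map_fst_univ (γ : Measure (X × X)) : γ.map Prod.fst univ = γ univ := by
  rw [Measure.map_apply measurable_fst MeasurableSet.univ, preimage_univ]

lemma map_snd_univ (γ : Measure (X × X)) : γ.map Prod.snd univ = γ univ := by
  rw [Measure.map_apply measurable_snd MeasurableSet.univ, preimage_univ]

lemma Bd.symm {μ ν : Measure X} {c : ℝ≥0∞} (h : Bd μ ν c) : Bd ν μ c := by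
  obtain ⟨γ, h1, h2, h3⟩ := h
  refine ⟨γ.map Prod.swap, ?_, ?_, ?_⟩
  · rw [Measure.map_map measurable_fst measurable_swap]; exact h2
  · rw [Measure.map_map measurable_snd measurable_swap]; exact h1
  · rw [Measure.map_apply measurable_swap MeasurableSet.univ, preimage_univ, max_comm,
      lintegral_map measurable_edist measurable_swap]
    simpa [edist_comm] using h3

lemma Bd.refl (μ : Measure X) : Bd μ μ 0 := by
  have hm : Measurable (fun x : X => (x, x)) := by fun_prop
  refine ⟨μ.map (fun x => (x, x)), ?_, ?_, ?_⟩
  · rw [Measure.map_map measurable_fst hm]; simp [Function.comp_def]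
  · rw [Measure.map_map measurable_snd hm]; simp [Function.comp_def]
  · rw [Measure.map_apply hm MeasurableSet.univ, lintegral_map measurable_edist hm]
    simp

lemma lint_eq (hd : ∀ x y : X, dist x y ≤ 1) (γ : Measure (X × X)) [IsFiniteMeasure γ] :
    ∫⁻ p, edist p.1 p.2 ∂γ = ENNReal.ofReal (∫ p, dist p.1 p.2 ∂γ) := by
  rw [ofReal_integral_eq_lintegral_ofReal]
  · simp [edist_dist]
  · refine Integrable.of_bound (C := 1) measurable_dist.aestronglyMeasurable ?_
    filter_upwards with p
    simpa using hd p.1 p.2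
  · filter_upwards with p using dist_nonneg

/-- completing a partial coupling -/
lemma extend (hd : ∀ x y : X, dist x y ≤ 1) {μ ν : Measure X} (hμ : μ univ ≤ 1) (hν : ν univ ≤ 1)
    (hle : ν univ ≤ μ univ) {c : ℝ≥0∞} (h : Bd μ ν c) :
    ∃ γ : Measure (X × X), γ univ ≤ 1 ∧ γ.map Prod.fst ≤ μ ∧ γ.map Prod.snd = ν ∧
      ∫⁻ p, edist p.1 p.2 ∂γ + μ univ ≤ c + ν univ := by
  obtain ⟨γ, h1, h2, h3⟩ := h
  rw [max_eq_left hle] at h3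
  have : IsFiniteMeasure μ := ⟨hμ.trans_lt ENNReal.one_lt_top⟩
  have : IsFiniteMeasure ν := ⟨hν.trans_lt ENNReal.one_lt_top⟩
  have : IsFiniteMeasure (γ.map Prod.fst) := isFiniteMeasure_of_le μ h1
  have : IsFiniteMeasure (γ.map Prod.snd) := isFiniteMeasure_of_le ν h2
  have hg : γ univ ≤ ν univ := by rw [← map_snd_univ]; exact h2 univ
  have : IsFiniteMeasure γ := ⟨hg.trans_lt (measure_lt_top ν _)⟩
  set μ' := μ - γ.map Prod.fst with hμ'
  set ν' := ν - γ.map Prod.snd with hν'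
  have e1 : μ' + γ.map Prod.fst = μ := Measure.sub_add_cancel_of_le h1
  have e2 : ν' + γ.map Prod.snd = ν := Measure.sub_add_cancel_of_le h2
  have m1 : μ' univ + γ univ = μ univ := by
    conv_rhs => rw [← e1]
    rw [Measure.add_apply, map_fst_univ]
  have m2 : ν' univ + γ univ = ν univ := by
    conv_rhs => rw [← e2]
    rw [Measure.add_apply, map_snd_univ]
  have m3 : ν' univ ≤ μ' univ := by
    rw [← m1, ← m2] at hle
    exact (ENNReal.add_le_add_iff_right (measure_ne_top γ _)).1 hle
  have k1 : (μ' univ)⁻¹ * ν' univ ≤ 1 := by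
    rw [mul_comm, ← div_eq_mul_inv]; exact ENNReal.div_le_of_le_mul (by simpa using m3)
  have k2 : ((μ' univ)⁻¹ * μ' univ) • ν' = ν' := by
    by_cases h0 : μ' univ = 0
    · have : ν' = 0 := by
        rw [← Measure.measure_univ_eq_zero]; exact le_antisymm (m3.trans h0.le) zero_le
      simp [this]
    · rw [ENNReal.inv_mul_cancel h0 (measure_ne_top _ _), one_smul]
  have k3 : ((μ' univ)⁻¹ * μ' univ) * ν' univ = ν' univ := by
    conv_rhs => rw [← k2]
    rfl
  set π := (μ' univ)⁻¹ • μ'.prod ν' with hπ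
  have hπu : π univ = ν' univ := by
    rw [hπ, Measure.smul_apply, ← univ_prod_univ, Measure.prod_prod, smul_eq_mul, ← mul_assoc, k3]
  refine ⟨γ + π, ?_, ?_, ?_, ?_⟩
  · rw [Measure.add_apply, hπu, add_comm, m2]; exact hν
  · rw [Measure.map_add _ _ measurable_fst, Measure.map_smul, Measure.map_fst_prod, smul_smul]
    conv_rhs => rw [← e1, add_comm]
    gcongr
    calc ((μ' univ)⁻¹ * ν' univ) • μ' ≤ (1 : ℝ≥0∞) • μ' := by gcongr
      _ = μ' := one_smul _ _
  · rw [Measure.map_add _ _ measurable_snd, Measure.map_smul, Measure.map_snd_prod, smul_smul, k2,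
      add_comm, e2]
  · rw [lintegral_add_measure]
    have : ∫⁻ p, edist p.1 p.2 ∂π ≤ ν' univ := by
      rw [← hπu]
      calc ∫⁻ p, edist p.1 p.2 ∂π ≤ ∫⁻ p, 1 ∂π := by
            apply lintegral_mono
            intro p
            simp only [edist_dist]
            exact ENNReal.ofReal_le_one.2 (hd _ _)
        _ = _ := by simp
    rw [← ENNReal.add_le_add_iff_right (measure_ne_top γ univ)]
    calc _ ≤ (∫⁻ p, edist p.1 p.2 ∂γ + ν' univ + μ univ) + γ univ := by gcongr
      _ = (∫⁻ p, edist p.1 p.2 ∂γ + μ univ) + ν univ := by rw [← m2]; ring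
      _ ≤ (c + γ univ) + ν univ := by gcongr
      _ = _ := by ring

lemma uwAux_le (hd : ∀ x y : X, dist x y ≤ 1) {μ ν : Measure X} (hμ : μ univ ≤ 1)
    (hν : ν univ ≤ 1) (hle : ν univ ≤ μ univ) {c : ℝ} (hc : 0 ≤ c)
    (h : Bd μ ν (ENNReal.ofReal c)) : uwAux dist μ ν ≤ c := by
  obtain ⟨γ, g1, g2, g3, g4⟩ := extend hd hμ hν hle h
  have : IsFiniteMeasure γ := ⟨g1.trans_lt ENNReal.one_lt_top⟩
  have hμ' : μ univ ≠ ∞ := (hμ.trans_lt ENNReal.one_lt_top).ne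
  have hν' : ν univ ≠ ∞ := (hν.trans_lt ENNReal.one_lt_top).ne
  have : sInf {r : ℝ | ∃ γ : Measure (X × X), γ Set.univ ≤ 1 ∧
      γ.map Prod.fst ≤ μ ∧ γ.map Prod.snd = ν ∧ r = ∫ p, dist p.1 p.2 ∂γ} ≤
      ∫ p, dist p.1 p.2 ∂γ := by
    apply csInf_le
    · refine ⟨0, ?_⟩
      rintro r ⟨γ, -, -, -, rfl⟩
      exact integral_nonneg fun _ => dist_nonneg
    · exact ⟨γ, g1, g2, g3, rfl⟩
  have h0 : 0 ≤ ∫ p, dist p.1 p.2 ∂γ := integral_nonneg fun _ => dist_nonneg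
  rw [lint_eq hd] at g4
  have := ENNReal.toReal_mono (by finiteness) g4
  rw [ENNReal.toReal_add (by finiteness) hμ', ENNReal.toReal_add (by finiteness) hν',
    ENNReal.toReal_ofReal h0, ENNReal.toReal_ofReal hc] at this
  unfold uwAux
  linarith

lemma uwDist_le (hd : ∀ x y : X, dist x y ≤ 1) {μ ν : Measure X} (hμ : μ univ ≤ 1)
    (hν : ν univ ≤ 1) {c : ℝ} (hc : 0 ≤ c)
    (h : Bd μ ν (ENNReal.ofReal c)) : uwDist dist μ ν ≤ c := by
  unfold uwDist
  split_ifs with hle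
  · exact uwAux_le hd hμ hν hle hc h
  · exact uwAux_le hd hν hμ (le_of_not_ge hle) hc h.symm

lemma Bd_one {μ ν : Measure X} (hμ : μ univ ≤ 1) (hν : ν univ ≤ 1) : Bd μ ν 1 :=
  ⟨0, by simp [Measure.zero_le], by simp [Measure.zero_le], by simp [hμ, hν]⟩

lemma uwAux_lt (hd : ∀ x y : X, dist x y ≤ 1) {μ ν : Measure X} (hμ : μ univ ≤ 1)
    (hν : ν univ ≤ 1) (hle : ν univ ≤ μ univ) {c : ℝ}
    (h : uwAux dist μ ν < c) : 0 ≤ uwAux dist μ ν ∧ Bd μ ν (ENNReal.ofReal c) := by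
  obtain ⟨γ₀, g1, g2, g3, g4⟩ := extend hd hμ hν hle (Bd_one hμ hν)
  have hμ' : μ univ ≠ ∞ := (hμ.trans_lt ENNReal.one_lt_top).ne
  have hν' : ν univ ≠ ∞ := (hν.trans_lt ENNReal.one_lt_top).ne
  have hle' := ENNReal.toReal_mono hμ' hle
  have hnn : 0 ≤ uwAux dist μ ν := by
    unfold uwAux
    have : 0 ≤ sInf {r : ℝ | ∃ γ : Measure (X × X), γ Set.univ ≤ 1 ∧
      γ.map Prod.fst ≤ μ ∧ γ.map Prod.snd = ν ∧ r = ∫ p, dist p.1 p.2 ∂γ} := by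
      apply Real.sInf_nonneg
      rintro r ⟨γ, -, -, -, rfl⟩
      exact integral_nonneg fun _ => dist_nonneg
    linarith
  refine ⟨hnn, ?_⟩
  have hc : 0 ≤ c := hnn.trans h.le
  unfold uwAux at h
  have h' : sInf {r : ℝ | ∃ γ : Measure (X × X), γ Set.univ ≤ 1 ∧
      γ.map Prod.fst ≤ μ ∧ γ.map Prod.snd = ν ∧ r = ∫ p, dist p.1 p.2 ∂γ} <
      c - ((μ univ).toReal - (ν univ).toReal) := by linarith
  obtain ⟨r, ⟨γ, k1, k2, k3, rfl⟩, k4⟩ := exists_lt_of_csInf_lt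
    (by exact ⟨_, γ₀, g1, g2, g3, rfl⟩) h'
  have : IsFiniteMeasure γ := ⟨k1.trans_lt ENNReal.one_lt_top⟩
  have h0 : 0 ≤ ∫ p, dist p.1 p.2 ∂γ := integral_nonneg fun _ => dist_nonneg
  refine ⟨γ, k2, k3.le, ?_⟩
  rw [max_eq_left hle, lint_eq hd, ← map_snd_univ γ, k3, ← ENNReal.ofReal_toReal hμ',
    ← ENNReal.ofReal_toReal hν', ← ENNReal.ofReal_add h0 (by positivity),
    ← ENNReal.ofReal_add hc (by positivity)]
  apply ENNReal.ofReal_le_ofReal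
  linarith

lemma uwDist_lt (hd : ∀ x y : X, dist x y ≤ 1) {μ ν : Measure X} (hμ : μ univ ≤ 1)
    (hν : ν univ ≤ 1) {c : ℝ}
    (h : uwDist dist μ ν < c) : Bd μ ν (ENNReal.ofReal c) := by
  unfold uwDist at h
  split_ifs at h with hle
  · exact (uwAux_lt hd hμ hν hle h).2
  · exact (uwAux_lt hd hν hμ (le_of_not_ge hle) h).2.symm

lemma uwDist_nonneg (hd : ∀ x y : X, dist x y ≤ 1) {μ ν : Measure X} (hμ : μ univ ≤ 1)
    (hν : ν univ ≤ 1) : 0 ≤ uwDist dist μ ν := by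
  unfold uwDist
  split_ifs with hle
  · exact (uwAux_lt hd hμ hν hle (lt_add_one _)).1
  · exact (uwAux_lt hd hν hμ (le_of_not_ge hle) (lt_add_one _)).1

lemma msum_le {Y : Type} [MeasurableSpace Y] {a b : ℕ → Measure Y} (h : ∀ i, a i ≤ b i) :
    Measure.sum a ≤ Measure.sum b := by
  rw [Measure.le_iff]
  intro s hs
  rw [Measure.sum_apply _ hs, Measure.sum_apply _ hs]
  exact ENNReal.tsum_le_tsum fun i => h i s

lemma exists_part [Nonempty X] {ε : ℝ≥0∞} (hε : 0 < ε) :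
    ∃ B : ℕ → Set X, (∀ i, MeasurableSet (B i)) ∧ Pairwise (fun i j => Disjoint (B i) (B j)) ∧
      (⋃ i, B i) = univ ∧ ∀ i, ∀ x ∈ B i, ∀ y ∈ B i, edist x y ≤ ε := by
  have hε2 : 0 < ε / 2 := ENNReal.half_pos hε.ne'
  let u := TopologicalSpace.denseSeq X
  refine ⟨disjointed fun i => Metric.eball (u i) (ε / 2), ?_, ?_, ?_, ?_⟩
  · exact fun i => MeasurableSet.disjointed (fun i => Metric.isOpen_eball.measurableSet) i
  · exact disjoint_disjointed _
  · rw [iUnion_disjointed]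
    refine eq_univ_of_forall fun x => ?_
    obtain ⟨y, ⟨i, rfl⟩, hy⟩ := EMetric.mem_closure_iff.1
      (TopologicalSpace.denseRange_denseSeq X x) _ hε2
    exact mem_iUnion.2 ⟨i, hy⟩
  · intro i x hx y hy
    have hx := disjointed_subset _ i hx
    have hy := disjointed_subset _ i hy
    calc edist x y ≤ edist x (u i) + edist y (u i) := edist_triangle_right _ _ _
      _ ≤ ε / 2 + ε / 2 := add_le_add (le_of_lt hx) (le_of_lt hy)
      _ = ε := ENNReal.add_halves ε

lemma aux_mass {a b n : ℝ≥0∞} (ha : a ≤ n) (hb : b ≤ n) (hn : n ≠ ∞) :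
    a + b ≤ n + n⁻¹ * (a * b) := by
  by_cases h0 : n = 0
  · subst h0; simp_all
  lift n to NNReal using hn
  lift a to NNReal using (ha.trans_lt ENNReal.coe_lt_top).ne
  lift b to NNReal using (hb.trans_lt ENNReal.coe_lt_top).ne
  have h0' : n ≠ 0 := by simpa using h0
  have h0 : 0 < (n : ℝ) := by positivity
  rw [← ENNReal.coe_inv h0']
  norm_cast at ha hb ⊢
  rw [← NNReal.coe_le_coe] at ha hb ⊢
  push_cast
  have : (n : ℝ) + (n : ℝ)⁻¹ * (a * b) - (a + b) = (n : ℝ)⁻¹ * ((n - a) * (n - b)) := by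
    field_simp; ring
  have h2 : 0 ≤ (n : ℝ)⁻¹ * (((n : ℝ) - a) * (n - b)) :=
    mul_nonneg (by positivity) (mul_nonneg (by linarith) (by linarith))
  linarith

lemma aux_inv {b n : ℝ≥0∞} (hb : b ≤ n) : n⁻¹ * b ≤ 1 := by
  rw [mul_comm, ← div_eq_mul_inv]; exact ENNReal.div_le_of_le_mul (by simpa using hb)

lemma glue [Nonempty X] {μ ν ρ : Measure X} [IsFiniteMeasure μ] [IsFiniteMeasure ν]
    [IsFiniteMeasure ρ] {γ₁ γ₂ : Measure (X × X)} (h1 : γ₁.map Prod.fst ≤ μ)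
    (h2 : γ₁.map Prod.snd ≤ ν) (h3 : γ₂.map Prod.fst ≤ ν) (h4 : γ₂.map Prod.snd ≤ ρ)
    {ε : ℝ≥0∞} (hε : 0 < ε) :
    ∃ γ : Measure (X × X), γ.map Prod.fst ≤ μ ∧ γ.map Prod.snd ≤ ρ ∧
      γ₁ univ + γ₂ univ ≤ ν univ + γ univ ∧
      ∫⁻ p, edist p.1 p.2 ∂γ ≤
        ∫⁻ p, edist p.1 p.2 ∂γ₁ + ∫⁻ p, edist p.1 p.2 ∂γ₂ + ε * ν univ := by
  obtain ⟨B, Bm, Bd, Bu, Be⟩ := exists_part (X := X) hε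
  have f1 : IsFiniteMeasure γ₁ := ⟨by
    rw [← map_fst_univ]; exact (h1 univ).trans_lt (measure_lt_top _ _)⟩
  have f2 : IsFiniteMeasure γ₂ := ⟨by
    rw [← map_fst_univ]; exact (h3 univ).trans_lt (measure_lt_top _ _)⟩
  let P : ℕ → Set (X × X) := fun i => Prod.snd ⁻¹' B i
  let Q : ℕ → Set (X × X) := fun i => Prod.fst ⁻¹' B i
  have Pm : ∀ i, MeasurableSet (P i) := fun i => measurable_snd (Bm i)
  have Qm : ∀ i, MeasurableSet (Q i) := fun i => measurable_fst (Bm i)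
  have Pd : Pairwise (fun i j => Disjoint (P i) (P j)) := fun i j h => (Bd h).preimage _
  have Qd : Pairwise (fun i j => Disjoint (Q i) (Q j)) := fun i j h => (Bd h).preimage _
  have Pu : (⋃ i, P i) = univ := by simp only [P, ← preimage_iUnion, Bu, preimage_univ]
  have Qu : (⋃ i, Q i) = univ := by simp only [Q, ← preimage_iUnion, Bu, preimage_univ]
  let α : ℕ → Measure (X × X) := fun i => γ₁.restrict (P i)
  let β : ℕ → Measure (X × X) := fun i => γ₂.restrict (Q i)
  have sα : Measure.sum α = γ₁ := by
    rw [← Measure.restrict_iUnion Pd Pm, Pu, Measure.restrict_univ]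
  have sβ : Measure.sum β = γ₂ := by
    rw [← Measure.restrict_iUnion Qd Qm, Qu, Measure.restrict_univ]
  have aν : ∀ i, α i univ ≤ ν (B i) := fun i => by
    simp only [α, Measure.restrict_apply_univ, P]
    rw [← Measure.map_apply measurable_snd (Bm i)]; exact h2 _
  have bν : ∀ i, β i univ ≤ ν (B i) := fun i => by
    simp only [β, Measure.restrict_apply_univ, Q]
    rw [← Measure.map_apply measurable_fst (Bm i)]; exact h3 _
  have hν : ∑' i, ν (B i) = ν univ := by rw [← measure_iUnion Bd Bm, Bu]
  let π : ℕ → Measure (X × X) := fun i =>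
    (ν (B i))⁻¹ • ((α i).map Prod.fst).prod ((β i).map Prod.snd)
  have hfst : ∀ i, (π i).map Prod.fst ≤ (α i).map Prod.fst := fun i => by
    simp only [π]
    rw [Measure.map_smul, Measure.map_fst_prod, smul_smul, map_snd_univ]
    calc _ ≤ (1 : ℝ≥0∞) • (α i).map Prod.fst := by gcongr; exact aux_inv (bν i)
      _ = _ := one_smul _ _
  have hsnd : ∀ i, (π i).map Prod.snd ≤ (β i).map Prod.snd := fun i => by
    simp only [π]
    rw [Measure.map_smul, Measure.map_snd_prod, smul_smul, map_fst_univ]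
    calc _ ≤ (1 : ℝ≥0∞) • (β i).map Prod.snd := by gcongr; exact aux_inv (aν i)
      _ = _ := one_smul _ _
  have hm : ∀ i, π i univ = (ν (B i))⁻¹ * (α i univ * β i univ) := fun i => by
    simp only [π]
    rw [Measure.smul_apply]
    conv_lhs => rw [← univ_prod_univ, Measure.prod_prod, map_fst_univ, map_snd_univ]
    rw [smul_eq_mul]
  have hcost : ∀ i, ∫⁻ p, edist p.1 p.2 ∂(π i) ≤
      ∫⁻ p, edist p.1 p.2 ∂(α i) + ∫⁻ p, edist p.1 p.2 ∂(β i) + ε * ν (B i) := fun i => by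
    simp only [π]
    have hsm : Measurable fun z : X × X => ∫⁻ x : X, edist x z.2 ∂((α i).map Prod.fst) := by
      exact Measurable.lintegral_prod_left' (f := fun q : X × (X × X) => edist q.1 q.2.2)
        (by fun_prop)
    have e1 : ∫⁻ p, edist p.1 p.2 ∂(((α i).map Prod.fst).prod ((β i).map Prod.snd)) ≤
        ∫⁻ q, ∫⁻ p, (edist p.1 p.2 + ε + edist q.1 q.2) ∂(α i) ∂(β i) := by
      rw [lintegral_prod_symm' _ measurable_edist, lintegral_map (by
        exact Measurable.lintegral_prod_left' (f := fun q : X × X => edist q.1 q.2)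
          (by fun_prop)) measurable_snd]
      simp only [β]
      apply setLIntegral_mono' (Qm i)
      intro q hq
      rw [lintegral_map (by fun_prop) measurable_fst]
      simp only [α]
      apply setLIntegral_mono' (Pm i)
      intro p hp
      calc edist p.1 q.2 ≤ edist p.1 p.2 + edist p.2 q.1 + edist q.1 q.2 := edist_triangle4 _ _ _ _
        _ ≤ _ := by gcongr; exact Be i _ hp _ hq
    have e2 : ∫⁻ q, ∫⁻ p, (edist p.1 p.2 + ε + edist q.1 q.2) ∂(α i) ∂(β i) =
        (∫⁻ p, edist p.1 p.2 ∂(α i)) * β i univ + ε * α i univ * β i univ +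
          (∫⁻ p, edist p.1 p.2 ∂(β i)) * α i univ := by
      have : ∀ q : X × X, ∫⁻ p : X × X, (edist p.1 p.2 + ε + edist q.1 q.2) ∂(α i) =
          ∫⁻ p, edist p.1 p.2 ∂(α i) + ε * α i univ + edist q.1 q.2 * α i univ := by
        intro q
        rw [lintegral_add_right _ measurable_const, lintegral_add_right _ measurable_const]
        simp
      simp_rw [this]
      rw [lintegral_add_left measurable_const, lintegral_mul_const _ measurable_edist]
      simp [add_mul]
    rw [lintegral_smul_measure, smul_eq_mul]
    calc _ ≤ (ν (B i))⁻¹ * ((∫⁻ p, edist p.1 p.2 ∂(α i)) * β i univ + ε * α i univ * β i univ +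
          (∫⁻ p, edist p.1 p.2 ∂(β i)) * α i univ) := by gcongr; exact e1.trans e2.le
      _ = (∫⁻ p, edist p.1 p.2 ∂(α i)) * ((ν (B i))⁻¹ * β i univ) +
          ε * α i univ * ((ν (B i))⁻¹ * β i univ) +
          (∫⁻ p, edist p.1 p.2 ∂(β i)) * ((ν (B i))⁻¹ * α i univ) := by ring
      _ ≤ (∫⁻ p, edist p.1 p.2 ∂(α i)) * 1 + ε * ν (B i) * 1 +
          (∫⁻ p, edist p.1 p.2 ∂(β i)) * 1 := by
        gcongr
        · exact aux_inv (bν i)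
        · exact aν i
        · exact aux_inv (bν i)
        · exact aux_inv (aν i)
      _ = _ := by ring
  refine ⟨Measure.sum π, ?_, ?_, ?_, ?_⟩
  · refine le_trans ?_ h1
    rw [← sα, Measure.map_sum measurable_fst.aemeasurable,
      Measure.map_sum measurable_fst.aemeasurable]
    exact msum_le hfst
  · refine le_trans ?_ h4
    rw [← sβ, Measure.map_sum measurable_snd.aemeasurable,
      Measure.map_sum measurable_snd.aemeasurable]
    exact msum_le hsnd
  · rw [← hν]
    conv_lhs => rw [← sα, ← sβ]
    rw [Measure.sum_apply _ MeasurableSet.univ, Measure.sum_apply _ MeasurableSet.univ,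
      Measure.sum_apply _ MeasurableSet.univ, ← ENNReal.tsum_add, ← ENNReal.tsum_add]
    apply ENNReal.tsum_le_tsum
    intro i
    rw [hm]
    exact aux_mass (aν i) (bν i) (measure_ne_top _ _)
  · rw [← hν]
    conv_rhs => rw [← sα, ← sβ]
    rw [lintegral_sum_measure, lintegral_sum_measure, lintegral_sum_measure, ← ENNReal.tsum_mul_left,
      ← ENNReal.tsum_add, ← ENNReal.tsum_add]
    exact ENNReal.tsum_le_tsum hcost

lemma Bd.trans [Nonempty X] {μ ν ρ : Measure X} (hμ : μ univ ≤ 1) (hν : ν univ ≤ 1)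
    (hρ : ρ univ ≤ 1) {c₁ c₂ ε : ℝ≥0∞} (hε : 0 < ε) (h1 : Bd μ ν c₁) (h2 : Bd ν ρ c₂) :
    Bd μ ρ (c₁ + c₂ + ε) := by
  have : IsFiniteMeasure μ := ⟨hμ.trans_lt ENNReal.one_lt_top⟩
  have : IsFiniteMeasure ν := ⟨hν.trans_lt ENNReal.one_lt_top⟩
  have : IsFiniteMeasure ρ := ⟨hρ.trans_lt ENNReal.one_lt_top⟩
  obtain ⟨γ₁, a1, a2, a3⟩ := h1
  obtain ⟨γ₂, b1, b2, b3⟩ := h2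
  obtain ⟨γ, g1, g2, g3, g4⟩ := glue a1 a2 b1 b2 hε
  refine ⟨γ, g1, g2, ?_⟩
  have f1 : γ₁ univ ≠ ∞ := by
    rw [← map_fst_univ]; exact ((a1 univ).trans_lt (measure_lt_top _ _)).ne
  have f2 : γ₂ univ ≠ ∞ := by
    rw [← map_fst_univ]; exact ((b1 univ).trans_lt (measure_lt_top _ _)).ne
  have hmax : max (μ univ) (ρ univ) + ν univ ≤
      max (μ univ) (ν univ) + max (ν univ) (ρ univ) := by
    rw [max_add]
    apply max_le
    · gcongr <;> simp
    · rw [add_comm]; gcongr <;> simp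
  have hfin : γ₁ univ + γ₂ univ ≠ ∞ := by finiteness
  rw [← ENNReal.add_le_add_iff_right hfin,
    ← ENNReal.add_le_add_iff_right (measure_ne_top ν univ)]
  calc _ ≤ ((∫⁻ p, edist p.1 p.2 ∂γ₁ + ∫⁻ p, edist p.1 p.2 ∂γ₂ + ε * ν univ) +
          max (μ univ) (ρ univ)) + (ν univ + γ univ) + ν univ := by gcongr
    _ = (∫⁻ p, edist p.1 p.2 ∂γ₁ + ∫⁻ p, edist p.1 p.2 ∂γ₂ + ε * ν univ) +
          (max (μ univ) (ρ univ) + ν univ) + γ univ + ν univ := by ring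
    _ ≤ (∫⁻ p, edist p.1 p.2 ∂γ₁ + ∫⁻ p, edist p.1 p.2 ∂γ₂ + ε * 1) +
          (max (μ univ) (ν univ) + max (ν univ) (ρ univ)) + γ univ + ν univ := by gcongr
    _ = (∫⁻ p, edist p.1 p.2 ∂γ₁ + max (μ univ) (ν univ)) +
        (∫⁻ p, edist p.1 p.2 ∂γ₂ + max (ν univ) (ρ univ)) + ε + γ univ + ν univ := by ring
    _ ≤ (c₁ + γ₁ univ) + (c₂ + γ₂ univ) + ε + γ univ + ν univ := by gcongr
    _ = _ := by ring

open scoped BoundedContinuousFunction in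
lemma test_fun (f : X →ᵇ ℝ) {μ : Measure X} (hμ : μ univ ≤ 1) {ε : ℝ} (hε : 0 < ε)
    (hd : ∀ x y : X, dist x y ≤ 1) :
    ∃ δ : ℝ, 0 < δ ∧ ∀ ν : Measure X, ν univ ≤ 1 → Bd μ ν (ENNReal.ofReal δ) →
      |∫ x, f x ∂μ - ∫ x, f x ∂ν| < ε := by
  have fμ : IsFiniteMeasure μ := ⟨hμ.trans_lt ENNReal.one_lt_top⟩
  obtain ⟨C, hC0, hC⟩ : ∃ C : ℝ, 0 < C ∧ ∀ x, |f x| ≤ C :=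
    ⟨‖f‖ + 1, by positivity, fun x => (f.norm_coe_le_norm x).trans (by linarith)⟩
  -- bad sets
  let E : ℕ → Set X := fun n => {x | ∃ y, dist x y < 1 / ((n : ℝ) + 1) ∧ ε / 4 < |f x - f y|}
  have Eo : ∀ n, IsOpen (E n) := by
    intro n
    have : E n = ⋃ y, ({x | dist x y < 1 / ((n : ℝ) + 1)} ∩ {x | ε / 4 < |f x - f y|}) := by
      ext x; simp [E]
    rw [this]
    refine isOpen_iUnion fun y => IsOpen.inter ?_ ?_
    · exact isOpen_lt (by fun_prop) (by fun_prop)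
    · exact isOpen_lt (by fun_prop) (by fun_prop)
  have Ea : Antitone E := by
    intro m n hmn x hx
    obtain ⟨y, h1, h2⟩ := hx
    refine ⟨y, h1.trans_le ?_, h2⟩
    have : (m : ℝ) ≤ n := by exact_mod_cast hmn
    gcongr
  have Ei : (⋂ n, E n) = ∅ := by
    refine eq_empty_of_forall_notMem fun x hx => ?_
    obtain ⟨r, hr, hr'⟩ := Metric.continuousAt_iff.1
      (f.continuous.continuousAt (x := x)) (ε / 4) (by positivity)
    obtain ⟨n, hn⟩ := exists_nat_one_div_lt hr
    obtain ⟨y, h1, h2⟩ := mem_iInter.1 hx n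
    have := hr' (x := y) (by rw [dist_comm]; exact h1.trans hn)
    rw [dist_comm, Real.dist_eq] at this
    linarith
  have Et : Tendsto (fun n => μ (E n)) atTop (𝓝 0) := by
    have := tendsto_measure_iInter_atTop (μ := μ) (fun n => (Eo n).measurableSet.nullMeasurableSet)
      Ea ⟨0, measure_ne_top _ _⟩
    rwa [Ei, measure_empty] at this
  obtain ⟨n, hn⟩ : ∃ n, μ (E n) < ENNReal.ofReal (ε / (8 * C)) :=
    (Et.eventually_lt_const (by simp; positivity)).exists
  have hn' : μ.real (E n) < ε / (8 * C) := by
    rw [Measure.real, ← ENNReal.lt_ofReal_iff_toReal_lt (measure_ne_top _ _)]; exact hn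
  set N : ℝ := (n : ℝ) + 1 with hN
  have N0 : 0 < N := by positivity
  refine ⟨ε / (8 * C * (N + 1)), by positivity, fun ν hν hB => ?_⟩
  set δ := ε / (8 * C * (N + 1)) with hδ
  have δ0 : 0 < δ := by positivity
  have fν : IsFiniteMeasure ν := ⟨hν.trans_lt ENNReal.one_lt_top⟩
  obtain ⟨γ, h1, h2, h3⟩ := hB
  have g1 : γ univ ≤ μ univ := by rw [← map_fst_univ]; exact h1 univ
  have g2 : γ univ ≤ ν univ := by rw [← map_snd_univ]; exact h2 univ
  have fγ : IsFiniteMeasure γ := ⟨g1.trans_lt (measure_lt_top _ _)⟩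
  have : IsFiniteMeasure (γ.map Prod.fst) := isFiniteMeasure_of_le μ h1
  have : IsFiniteMeasure (γ.map Prod.snd) := isFiniteMeasure_of_le ν h2
  have e1 : (μ - γ.map Prod.fst) + γ.map Prod.fst = μ := Measure.sub_add_cancel_of_le h1
  have e2 : (ν - γ.map Prod.snd) + γ.map Prod.snd = ν := Measure.sub_add_cancel_of_le h2
  have c0 : 0 ≤ ∫ p, dist p.1 p.2 ∂γ := integral_nonneg fun _ => dist_nonneg
  have h3' : ∫ p, dist p.1 p.2 ∂γ + max (μ.real univ) (ν.real univ) ≤ δ + γ.real univ := by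
    rw [lint_eq hd] at h3
    have := ENNReal.toReal_mono (by finiteness) h3
    rwa [ENNReal.toReal_add (by finiteness) (by finiteness),
      ENNReal.toReal_add (by finiteness) (by finiteness), ENNReal.toReal_ofReal c0,
      ENNReal.toReal_ofReal δ0.le, ENNReal.toReal_max (by finiteness) (by finiteness)] at this
  have q1 : μ.real univ ≤ max (μ.real univ) (ν.real univ) := le_max_left _ _
  have q2 : ν.real univ ≤ max (μ.real univ) (ν.real univ) := le_max_right _ _
  have g1' : γ.real univ ≤ μ.real univ := ENNReal.toReal_mono (by finiteness) g1
  have g3' : γ.real univ ≤ 1 := by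
    have := ENNReal.toReal_mono (by finiteness) (g1.trans hμ)
    simpa [Measure.real] using this
  have m1 : (μ - γ.map Prod.fst).real univ + γ.real univ = μ.real univ := by
    conv_rhs => rw [← e1]
    rw [measureReal_add_apply]
    simp only [Measure.real, map_fst_univ]
  have m2 : (ν - γ.map Prod.snd).real univ + γ.real univ = ν.real univ := by
    conv_rhs => rw [← e2]
    rw [measureReal_add_apply]
    simp only [Measure.real, map_snd_univ]
  have i1 : ∫ x, f x ∂μ = ∫ x, f x ∂(μ - γ.map Prod.fst) + ∫ p, f p.1 ∂γ := by
    conv_lhs => rw [← e1]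
    rw [integral_add_measure (f.integrable _) (f.integrable _), integral_map
      measurable_fst.aemeasurable f.continuous.aestronglyMeasurable]
  have i2 : ∫ x, f x ∂ν = ∫ x, f x ∂(ν - γ.map Prod.snd) + ∫ p, f p.2 ∂γ := by
    conv_lhs => rw [← e2]
    rw [integral_add_measure (f.integrable _) (f.integrable _), integral_map
      measurable_snd.aemeasurable f.continuous.aestronglyMeasurable]
  have j1 : |∫ x, f x ∂(μ - γ.map Prod.fst)| ≤ C * (μ - γ.map Prod.fst).real univ := by
    rw [← Real.norm_eq_abs]
    exact norm_integral_le_of_norm_le_const (Eventually.of_forall hC)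
  have j2 : |∫ x, f x ∂(ν - γ.map Prod.snd)| ≤ C * (ν - γ.map Prod.snd).real univ := by
    rw [← Real.norm_eq_abs]
    exact norm_integral_le_of_norm_le_const (Eventually.of_forall hC)
  have if1 : Integrable (fun p : X × X => f p.1) γ :=
    Integrable.of_bound (C := C) (f.continuous.comp continuous_fst).aestronglyMeasurable
      (Eventually.of_forall fun p => hC p.1)
  have if2 : Integrable (fun p : X × X => f p.2) γ :=
    Integrable.of_bound (C := C) (f.continuous.comp continuous_snd).aestronglyMeasurable
      (Eventually.of_forall fun p => hC p.2)
  have id1 : Integrable (fun p : X × X => dist p.1 p.2) γ :=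
    Integrable.of_bound (C := 1) measurable_dist.aestronglyMeasurable
      (Eventually.of_forall fun p => by simpa using hd p.1 p.2)
  have Em : MeasurableSet (Prod.fst ⁻¹' E n : Set (X × X)) := measurable_fst (Eo n).measurableSet
  have ie : Integrable ((Prod.fst ⁻¹' E n : Set (X × X)).indicator fun _ => 2 * C) γ :=
    (integrable_const _).indicator Em
  have j3 : |∫ p, (f p.1 - f p.2) ∂γ| ≤
      ∫ p, (ε / 4 + (Prod.fst ⁻¹' E n : Set (X × X)).indicator (fun _ => 2 * C) p +
        2 * C * N * dist p.1 p.2) ∂γ := by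
    rw [← Real.norm_eq_abs]
    refine norm_integral_le_of_norm_le (((integrable_const _).add ie).add (id1.const_mul _))
      (Eventually.of_forall fun p => ?_)
    rw [Real.norm_eq_abs]
    have b : |f p.1 - f p.2| ≤ 2 * C := (abs_sub _ _).trans (by linarith [hC p.1, hC p.2])
    have d0 : 0 ≤ 2 * C * N * dist p.1 p.2 := by positivity
    by_cases hp : p ∈ (Prod.fst ⁻¹' E n : Set (X × X))
    · rw [indicator_of_mem hp]; linarith
    · rw [indicator_of_notMem hp]
      by_cases hp' : dist p.1 p.2 < 1 / N
      · have : ¬ (ε / 4 < |f p.1 - f p.2|) := fun h => hp ⟨p.2, hp', h⟩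
        linarith
      · have : 1 ≤ N * dist p.1 p.2 := by
          rw [not_lt, div_le_iff₀ N0] at hp'; linarith
        nlinarith
  have j4 : ∫ p, (ε / 4 + (Prod.fst ⁻¹' E n : Set (X × X)).indicator (fun _ => 2 * C) p +
        2 * C * N * dist p.1 p.2) ∂γ =
      ε / 4 * γ.real univ + 2 * C * γ.real (Prod.fst ⁻¹' E n) +
        2 * C * N * ∫ p, dist p.1 p.2 ∂γ := by
    have ia : Integrable (fun p => ε / 4 +
        (Prod.fst ⁻¹' E n : Set (X × X)).indicator (fun _ => 2 * C) p) γ :=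
      (integrable_const _).add ie
    rw [integral_add ia (id1.const_mul _),
      integral_add (integrable_const _) ie, integral_const, integral_indicator_const _ Em,
      integral_const_mul]
    simp only [smul_eq_mul]; ring
  have j5 : γ.real (Prod.fst ⁻¹' E n) ≤ μ.real (E n) := by
    apply ENNReal.toReal_mono (by finiteness)
    rw [← Measure.map_apply measurable_fst (Eo n).measurableSet]
    exact h1 _
  have j6 : ∫ x, f x ∂μ - ∫ x, f x ∂ν = ∫ x, f x ∂(μ - γ.map Prod.fst) -
      ∫ x, f x ∂(ν - γ.map Prod.snd) + ∫ p, (f p.1 - f p.2) ∂γ := by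
    rw [i1, i2, integral_sub if1 if2]; ring
  have k1 : ∫ p, dist p.1 p.2 ∂γ ≤ δ := by linarith
  have k2 : (μ - γ.map Prod.fst).real univ ≤ δ := by linarith
  have k3 : (ν - γ.map Prod.snd).real univ ≤ δ := by linarith
  have k4 : 2 * C * N * ∫ p, dist p.1 p.2 ∂γ ≤ 2 * C * N * δ := by gcongr
  have k5 : 2 * C * γ.real (Prod.fst ⁻¹' E n) ≤ 2 * C * (ε / (8 * C)) := by
    gcongr; linarith
  have k5' : 2 * C * (ε / (8 * C)) = ε / 4 := by field_simp; norm_num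
  have k6 : C * (μ - γ.map Prod.fst).real univ ≤ C * δ := by gcongr
  have k7 : C * (ν - γ.map Prod.snd).real univ ≤ C * δ := by gcongr
  have k8 : 2 * C * N * δ + C * δ + C * δ = ε / 4 := by
    rw [hδ]; field_simp; ring
  have k9 : ε / 4 * γ.real univ ≤ ε / 4 := by nlinarith
  rw [j6]
  calc _ ≤ |∫ x, f x ∂(μ - γ.map Prod.fst)| + |∫ x, f x ∂(ν - γ.map Prod.snd)| +
        |∫ p, (f p.1 - f p.2) ∂γ| :=
        (abs_add_le _ _).trans (by gcongr; exact abs_sub _ _)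
    _ < ε := by linarith

/-- bump functions -/
def hb [Nonempty X] (ε : ℝ) (i : ℕ) (x : X) : ℝ :=
  max 0 (1 - dist x (TopologicalSpace.denseSeq X i) / ε)

/-- running maxima of bump functions -/
def Gb [Nonempty X] (ε : ℝ) : ℕ → X → ℝ
  | 0 => fun _ => 0
  | n + 1 => fun x => max (Gb ε n x) (hb ε n x)

lemma hb_cont [Nonempty X] (ε : ℝ) (i : ℕ) : Continuous (hb (X := X) ε i) := by
  unfold hb; fun_prop

lemma Gb_cont [Nonempty X] (ε : ℝ) (n : ℕ) : Continuous (Gb (X := X) ε n) := by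
  induction n with
  | zero => exact continuous_const
  | succ n ih => exact ih.max (hb_cont ε n)

lemma Gb_nonneg [Nonempty X] (ε : ℝ) (n : ℕ) (x : X) : 0 ≤ Gb ε n x := by
  induction n with
  | zero => exact le_rfl
  | succ n ih => exact ih.trans (le_max_left _ _)

lemma hb_le [Nonempty X] {ε : ℝ} (hε : 0 < ε) (n : ℕ) (x : X) : hb ε n x ≤ 1 := by
  unfold hb
  have : 0 ≤ dist x (TopologicalSpace.denseSeq X n) / ε := by positivity
  exact max_le zero_le_one (by linarith)

lemma Gb_le [Nonempty X] {ε : ℝ} (hε : 0 < ε) (n : ℕ) (x : X) : Gb ε n x ≤ 1 := by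
  induction n with
  | zero => exact zero_le_one
  | succ n ih => exact max_le ih (hb_le hε n x)

lemma Gb_mono [Nonempty X] (ε : ℝ) (x : X) : Monotone (fun n => Gb ε n x) :=
  monotone_nat_of_le_succ fun n => le_max_left _ _

lemma Gb_tendsto [Nonempty X] {ε : ℝ} (hε : 0 < ε) (x : X) :
    Tendsto (fun n => Gb ε n x) atTop (𝓝 1) := by
  rw [Metric.tendsto_atTop]
  intro r hr
  obtain ⟨y, ⟨i, rfl⟩, hy⟩ := Metric.mem_closure_iff.1
      (TopologicalSpace.denseRange_denseSeq X x) (r * ε) (by positivity)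
  refine ⟨i + 1, fun n hn => ?_⟩
  have h1 := Gb_mono ε x hn
  have h2 : hb ε i x ≤ Gb ε (i + 1) x := le_max_right _ _
  have h3 : 1 - dist x (TopologicalSpace.denseSeq X i) / ε ≤ hb ε i x := le_max_right _ _
  have h4 : dist x (TopologicalSpace.denseSeq X i) / ε < r := by rwa [div_lt_iff₀ hε]
  have h5 := Gb_le hε n x
  simp only at h1
  rw [Real.dist_eq, abs_lt]
  constructor <;> linarith

/-- partition of unity -/
def fb [Nonempty X] (ε : ℝ) (i : ℕ) (x : X) : ℝ := Gb ε (i + 1) x - Gb ε i x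

lemma fb_nonneg [Nonempty X] (ε : ℝ) (i : ℕ) (x : X) : 0 ≤ fb ε i x :=
  sub_nonneg.2 (Gb_mono ε x (Nat.le_succ i))

lemma fb_le [Nonempty X] {ε : ℝ} (hε : 0 < ε) (i : ℕ) (x : X) : fb ε i x ≤ 1 := by
  unfold fb; linarith [Gb_le hε (i + 1) x, Gb_nonneg ε i x]

lemma fb_cont [Nonempty X] (ε : ℝ) (i : ℕ) : Continuous (fb (X := X) ε i) :=
  (Gb_cont ε _).sub (Gb_cont ε _)

lemma fb_sum [Nonempty X] (ε : ℝ) (N : ℕ) (x : X) :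
    ∑ i ∈ Finset.range N, fb ε i x = Gb ε N x := by
  unfold fb
  rw [Finset.sum_range_sub (fun i => Gb ε i x)]
  simp [Gb]

lemma fb_supp [Nonempty X] {ε : ℝ} (hε : 0 < ε) (i : ℕ) (x : X) (h : fb ε i x ≠ 0) :
    dist x (TopologicalSpace.denseSeq X i) < ε := by
  by_contra hc
  apply h
  have : hb ε i x = 0 := by
    unfold hb
    rw [max_eq_left]
    rw [not_lt] at hc
    rw [sub_nonpos, le_div_iff₀ hε]; linarith
  unfold fb
  rw [sub_eq_zero]
  show max _ _ = _
  rw [this, max_eq_left (Gb_nonneg _ _ _)]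

/-- `fb` in extended nonnegative reals -/
def fe [Nonempty X] (ε : ℝ) (i : ℕ) (x : X) : ℝ≥0∞ := ENNReal.ofReal (fb ε i x)

lemma fe_meas [Nonempty X] (ε : ℝ) (i : ℕ) : Measurable (fe (X := X) ε i) :=
  (fb_cont ε i).measurable.ennreal_ofReal

lemma aux_max {m n : ℝ≥0∞} (hm : m ≠ ∞) (hn : n ≠ ∞) : (max m n)⁻¹ * (m * n) = min m n := by
  by_cases h0 : max m n = 0
  · rw [h0]
    have : m = 0 := le_antisymm (h0 ▸ le_max_left m n) zero_le
    simp [this]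
  rw [← max_mul_min m n, ← mul_assoc, ENNReal.inv_mul_cancel h0, one_mul]
  exact (max_lt hm.lt_top hn.lt_top).ne

lemma wk [Nonempty X] {μ : Measure X} (hμ : μ univ ≤ 1) {ε : ℝ} (hε : 0 < ε) :
    ∃ N : ℕ, ∀ δ : ℝ≥0∞, ∀ ν : Measure X, ν univ ≤ 1 → ν univ ≤ μ univ + δ →
      (∀ i < N, ∫⁻ x, fe ε i x ∂μ ≤ ∫⁻ x, fe ε i x ∂ν + δ) →
      Bd μ ν (3 * ENNReal.ofReal ε + (N + 1) * δ) := by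
  have fμ : IsFiniteMeasure μ := ⟨hμ.trans_lt ENNReal.one_lt_top⟩
  have hsum : ∀ N x, ∑ i ∈ Finset.range N, fe (X := X) ε i x = ENNReal.ofReal (Gb ε N x) := by
    intro N x
    unfold fe
    rw [← ENNReal.ofReal_sum_of_nonneg fun i _ => fb_nonneg ε i x, fb_sum]
  have ht : Tendsto (fun N => ∫⁻ x, ENNReal.ofReal (Gb ε N x) ∂μ) atTop (𝓝 (∫⁻ x, 1 ∂μ)) := by
    refine lintegral_tendsto_of_tendsto_of_monotone
      (fun n => (Gb_cont ε n).measurable.ennreal_ofReal.aemeasurable)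
      (Eventually.of_forall fun x m n hmn => ENNReal.ofReal_le_ofReal (Gb_mono ε x hmn))
      (Eventually.of_forall fun x => ?_)
    simpa using ENNReal.tendsto_ofReal (Gb_tendsto hε x)
  have hεe : 0 < ENNReal.ofReal ε := by simpa using hε
  obtain ⟨N, hN⟩ : ∃ N, μ univ ≤ ∫⁻ x, ENNReal.ofReal (Gb ε N x) ∂μ + ENNReal.ofReal ε := by
    have h2 : Tendsto (fun N => ∫⁻ x, ENNReal.ofReal (Gb ε N x) ∂μ + ENNReal.ofReal ε) atTop
      (𝓝 (μ univ + ENNReal.ofReal ε)) := by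
      simpa using ht.add_const (ENNReal.ofReal ε)
    obtain ⟨N, hN⟩ := (h2.eventually_const_lt
      (ENNReal.lt_add_right (measure_ne_top μ _) hεe.ne')).exists
    exact ⟨N, hN.le⟩
  refine ⟨N, fun δ ν hν hνμ hi => ?_⟩
  have fν : IsFiniteMeasure ν := ⟨hν.trans_lt ENNReal.one_lt_top⟩
  let w : Measure X → ℕ → Measure X := fun μ i => μ.withDensity (fe ε i)
  have wu : ∀ (μ : Measure X) i, w μ i univ = ∫⁻ x, fe ε i x ∂μ := fun μ i => by
    simp [w, withDensity_apply _ MeasurableSet.univ]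
  have wle : ∀ μ : Measure X, ∑ i ∈ Finset.range N, w μ i ≤ μ := by
    intro μ
    rw [Measure.le_iff]
    intro s hs
    simp only [Measure.finsetSum_apply, w]
    calc ∑ i ∈ Finset.range N, μ.withDensity (fe ε i) s
        = ∑ i ∈ Finset.range N, ∫⁻ x in s, fe ε i x ∂μ := by
          simp_rw [withDensity_apply _ hs]
      _ = ∫⁻ x in s, ENNReal.ofReal (Gb ε N x) ∂μ := by
          rw [← lintegral_finsetSum _ fun i _ => fe_meas ε i]
          simp_rw [hsum]
      _ ≤ ∫⁻ x in s, 1 ∂μ := by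
          apply lintegral_mono
          intro x
          exact ENNReal.ofReal_le_one.2 (Gb_le hε N x)
      _ = μ s := by simp
  have wfin : ∀ (μ : Measure X) [IsFiniteMeasure μ] i, IsFiniteMeasure (w μ i) := by
    intro μ _ i
    refine ⟨?_⟩
    rw [wu]
    calc ∫⁻ x, fe ε i x ∂μ ≤ ∫⁻ x, 1 ∂μ := by
          apply lintegral_mono
          intro x
          exact ENNReal.ofReal_le_one.2 (fb_le hε i x)
      _ < ∞ := by simp
  have w1 := wfin μ
  have w2 := wfin ν
  let c : ℕ → ℝ≥0∞ := fun i => (max (w μ i univ) (w ν i univ))⁻¹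
  let π : ℕ → Measure (X × X) := fun i => c i • (w μ i).prod (w ν i)
  have πu : ∀ i, π i univ = min (w μ i univ) (w ν i univ) := by
    intro i
    simp only [π, Measure.smul_apply, smul_eq_mul]
    rw [← univ_prod_univ, Measure.prod_prod]
    exact aux_max (measure_ne_top _ _) (measure_ne_top _ _)
  have hcost : ∀ i, ∫⁻ p, edist p.1 p.2 ∂(π i) ≤ 2 * ENNReal.ofReal ε * π i univ := by
    intro i
    simp only [π]
    rw [← lintegral_const]
    apply lintegral_mono_ae
    refine Measure.ae_smul_measure ?_ _
    have a1 : ∀ μ : Measure X, ∀ᵐ x ∂(w μ i), dist x (TopologicalSpace.denseSeq X i) < ε := by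
      intro μ
      rw [ae_withDensity_iff (fe_meas ε i)]
      refine Eventually.of_forall fun x hx => fb_supp hε i x fun h => hx ?_
      simp [fe, h]
    have b1 := (Measure.quasiMeasurePreserving_fst (μ := w μ i) (ν := w ν i)).ae (a1 μ)
    have b2 := (Measure.quasiMeasurePreserving_snd (μ := w μ i) (ν := w ν i)).ae (a1 ν)
    filter_upwards [b1, b2] with p h1 h2
    rw [edist_dist, two_mul, ← ENNReal.ofReal_add hε.le hε.le]
    apply ENNReal.ofReal_le_ofReal
    linarith [dist_triangle_right p.1 p.2 (TopologicalSpace.denseSeq X i)]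
  have mapsum : ∀ g : X × X → X, Measurable g → ∀ s : Finset ℕ,
      (∑ i ∈ s, π i).map g = ∑ i ∈ s, (π i).map g := by
    intro g hg s
    induction s using Finset.induction_on with
    | empty => simp
    | insert a s ha ih => rw [Finset.sum_insert ha, Finset.sum_insert ha, Measure.map_add _ _ hg, ih]
  have hfst : (∑ i ∈ Finset.range N, π i).map Prod.fst ≤ μ := by
    refine le_trans ?_ (wle μ)
    rw [mapsum _ measurable_fst]
    refine Finset.sum_le_sum fun i _ => ?_
    simp only [π]
    rw [Measure.map_smul, Measure.map_fst_prod, smul_smul]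
    calc _ ≤ (1 : ℝ≥0∞) • w μ i := by gcongr; exact aux_inv (le_max_right _ _)
      _ = _ := one_smul _ _
  have hsnd : (∑ i ∈ Finset.range N, π i).map Prod.snd ≤ ν := by
    refine le_trans ?_ (wle ν)
    rw [mapsum _ measurable_snd]
    refine Finset.sum_le_sum fun i _ => ?_
    simp only [π]
    rw [Measure.map_smul, Measure.map_snd_prod, smul_smul]
    calc _ ≤ (1 : ℝ≥0∞) • w ν i := by gcongr; exact aux_inv (le_max_left _ _)
      _ = _ := one_smul _ _
  refine ⟨∑ i ∈ Finset.range N, π i, hfst, hsnd, ?_⟩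
  set γ := ∑ i ∈ Finset.range N, π i with hγ
  have γ1 : γ univ ≤ 1 := by rw [← map_fst_univ]; exact (hfst univ).trans hμ
  have γu : γ univ = ∑ i ∈ Finset.range N, min (w μ i univ) (w ν i univ) := by
    rw [hγ, Measure.finsetSum_apply]; simp_rw [πu]
  have hc : ∫⁻ p, edist p.1 p.2 ∂γ ≤ 2 * ENNReal.ofReal ε := by
    calc ∫⁻ p, edist p.1 p.2 ∂γ = ∑ i ∈ Finset.range N, ∫⁻ p, edist p.1 p.2 ∂(π i) := by
          rw [hγ, lintegral_finsetSum_measure]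
      _ ≤ ∑ i ∈ Finset.range N, 2 * ENNReal.ofReal ε * π i univ :=
          Finset.sum_le_sum fun i _ => hcost i
      _ = 2 * ENNReal.ofReal ε * γ univ := by
          rw [← Finset.mul_sum, hγ, Measure.finsetSum_apply]
      _ ≤ 2 * ENNReal.ofReal ε * 1 := by gcongr
      _ = _ := mul_one _
  have hmass : μ univ ≤ γ univ + N * δ + ENNReal.ofReal ε := by
    refine hN.trans ?_
    gcongr
    simp_rw [← hsum]
    rw [lintegral_finsetSum _ fun i _ => fe_meas ε i, γu]
    calc ∑ i ∈ Finset.range N, ∫⁻ x, fe ε i x ∂μ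
        ≤ ∑ i ∈ Finset.range N, (min (w μ i univ) (w ν i univ) + δ) := by
          refine Finset.sum_le_sum fun i hi' => ?_
          rw [min_add, wu, wu]
          exact le_min le_self_add (hi i (Finset.mem_range.1 hi'))
      _ = _ := by rw [Finset.sum_add_distrib]; simp
  have hmax : max (μ univ) (ν univ) ≤ μ univ + δ := max_le le_self_add hνμ
  calc _ ≤ 2 * ENNReal.ofReal ε + ((γ univ + N * δ + ENNReal.ofReal ε) + δ) := by
        gcongr; exact hmax.trans (by gcongr)
    _ = _ := by ring

open scoped BoundedContinuousFunction in
/-- countable family of test functions -/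
def Fam (X : Type) [MetricSpace X] [MeasurableSpace X] [BorelSpace X] [SecondCountableTopology X]
    [Nonempty X] (k : ℕ) : ℕ → X →ᵇ ℝ
  | 0 => BoundedContinuousFunction.const X 1
  | i + 1 => BoundedContinuousFunction.ofNormedAddCommGroup (fb (1 / ((k : ℝ) + 1)) i)
      (fb_cont _ i) 1 (fun x => by
        rw [Real.norm_eq_abs, abs_of_nonneg (fb_nonneg _ _ _)]
        exact fb_le (by positivity) i x)

lemma nb [Nonempty X] (hd : ∀ x y : X, dist x y ≤ 1) {μ : Measure X} (hμ : μ univ ≤ 1) {r : ℝ}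
    (hr : 0 < r) : ∃ (k N : ℕ) (δ : ℝ), 0 < δ ∧ ∀ ν : Measure X, ν univ ≤ 1 →
      (∀ j ≤ N, |∫ x, Fam X k j x ∂μ - ∫ x, Fam X k j x ∂ν| < δ) → uwDist dist μ ν < r := by
  have fμ : IsFiniteMeasure μ := ⟨hμ.trans_lt ENNReal.one_lt_top⟩
  obtain ⟨k, hk⟩ := exists_nat_one_div_lt (show 0 < r / 6 by positivity)
  set ε : ℝ := 1 / ((k : ℝ) + 1) with hεd
  have hε : 0 < ε := by positivity
  obtain ⟨N, hN⟩ := wk hμ hε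
  refine ⟨k, N, r / (4 * (N + 1)), by positivity, fun ν hν hj => ?_⟩
  set δ := r / (4 * ((N : ℝ) + 1)) with hδ
  have hδ0 : 0 < δ := by positivity
  have fν : IsFiniteMeasure ν := ⟨hν.trans_lt ENNReal.one_lt_top⟩
  have hfe : ∀ (ρ : Measure X) [IsFiniteMeasure ρ] (i : ℕ),
      ∫⁻ x, fe ε i x ∂ρ = ENNReal.ofReal (∫ x, Fam X k (i + 1) x ∂ρ) := by
    intro ρ _ i
    rw [ofReal_integral_eq_lintegral_ofReal ((Fam X k (i + 1)).integrable ρ)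
      (Eventually.of_forall fun x => fb_nonneg _ i x)]
    rfl
  have hnn : ∀ i : ℕ, 0 ≤ ∫ x, Fam X k (i + 1) x ∂ν := fun i =>
    integral_nonneg fun x => fb_nonneg _ i x
  have hB := hN (ENNReal.ofReal δ) ν hν (by
    have := hj 0 (Nat.zero_le _)
    simp only [Fam, BoundedContinuousFunction.const_apply, integral_const, smul_eq_mul,
      mul_one] at this
    rw [abs_lt] at this
    rw [← ENNReal.ofReal_toReal (measure_ne_top μ univ),
      ← ENNReal.ofReal_toReal (measure_ne_top ν univ),
      ← ENNReal.ofReal_add ENNReal.toReal_nonneg hδ0.le]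
    apply ENNReal.ofReal_le_ofReal
    have h1 := this.1
    simp only [Measure.real] at h1
    linarith) (by
    intro i hi
    have := hj (i + 1) hi
    rw [abs_lt] at this
    rw [hfe μ, hfe ν, ← ENNReal.ofReal_add (hnn i) hδ0.le]
    apply ENNReal.ofReal_le_ofReal
    linarith)
  have e : 3 * ENNReal.ofReal ε + (N + 1) * ENNReal.ofReal δ =
      ENNReal.ofReal (3 * ε + (N + 1) * δ) := by
    rw [ENNReal.ofReal_add (by positivity) (by positivity), ENNReal.ofReal_mul (by positivity),
      ENNReal.ofReal_mul (by positivity), ENNReal.ofReal_add (by positivity) (by positivity)]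
    simp
  rw [e] at hB
  refine (uwDist_le hd hμ hν (by positivity) hB).trans_lt ?_
  have : (N + 1) * δ = r / 4 := by rw [hδ]; field_simp
  rw [this]
  linarith

lemma uw_self (hd : ∀ x y : X, dist x y ≤ 1) {μ : Measure X} (hμ : μ univ ≤ 1) :
    uwDist dist μ μ = 0 :=
  le_antisymm (uwDist_le hd hμ hμ le_rfl (by simpa using Bd.refl μ)) (uwDist_nonneg hd hμ hμ)

lemma uw_symm_le (hd : ∀ x y : X, dist x y ≤ 1) {μ ν : Measure X} (hμ : μ univ ≤ 1)
    (hν : ν univ ≤ 1) : uwDist dist μ ν ≤ uwDist dist ν μ := by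
  apply le_of_forall_gt_imp_ge_of_dense
  intro c hc
  exact uwDist_le hd hμ hν ((uwDist_nonneg hd hν hμ).trans hc.le) (uwDist_lt hd hν hμ hc).symm

lemma uw_tri [Nonempty X] (hd : ∀ x y : X, dist x y ≤ 1) {μ ν ρ : Measure X} (hμ : μ univ ≤ 1)
    (hν : ν univ ≤ 1) (hρ : ρ univ ≤ 1) :
    uwDist dist μ ρ ≤ uwDist dist μ ν + uwDist dist ν ρ := by
  apply le_of_forall_pos_le_add
  intro ε hε
  have h1 := uwDist_lt hd hμ hν (lt_add_of_pos_right (uwDist dist μ ν) (show 0 < ε / 3 by positivity))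
  have h2 := uwDist_lt hd hν hρ (lt_add_of_pos_right (uwDist dist ν ρ) (show 0 < ε / 3 by positivity))
  have h3 := Bd.trans hμ hν hρ (ε := ENNReal.ofReal (ε / 3)) (by simpa using hε) h1 h2
  have p1 := uwDist_nonneg hd hμ hν
  have p2 := uwDist_nonneg hd hν hρ
  rw [← ENNReal.ofReal_add (by positivity) (by positivity),
    ← ENNReal.ofReal_add (by positivity) (by positivity)] at h3
  refine (uwDist_le hd hμ hρ (by positivity) h3).trans (by linarith)

lemma uw_eq (hd : ∀ x y : X, dist x y ≤ 1) {μ ν : Measure X} (hμ : μ univ ≤ 1)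
    (hν : ν univ ≤ 1) (h : uwDist dist μ ν = 0) : μ = ν := by
  have fμ : IsFiniteMeasure μ := ⟨hμ.trans_lt ENNReal.one_lt_top⟩
  have fν : IsFiniteMeasure ν := ⟨hν.trans_lt ENNReal.one_lt_top⟩
  apply ext_of_forall_integral_eq_of_IsFiniteMeasure
  intro f
  rw [← sub_eq_zero, ← abs_eq_zero]
  apply le_antisymm _ (abs_nonneg _)
  apply le_of_forall_pos_le_add
  intro ε hε
  obtain ⟨δ, hδ, H⟩ := test_fun f hμ hε hd
  rw [zero_add]
  exact (H ν hν (uwDist_lt hd hμ hν (by rw [h]; exact hδ))).le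

lemma uw_metric [Nonempty X] (hd : ∀ x y : X, dist x y ≤ 1) {S : Type} (m : S → Measure X)
    (hm : ∀ s, m s univ ≤ 1) (inj : Function.Injective m) :
    IsMetric (fun s t => uwDist dist (m s) (m t)) :=
  ⟨fun s t => uwDist_nonneg hd (hm s) (hm t),
   fun s t => le_antisymm (uw_symm_le hd (hm s) (hm t)) (uw_symm_le hd (hm t) (hm s)),
   fun s t => ⟨fun h => inj (uw_eq hd (hm s) (hm t) h), fun h => by
     subst h; exact uw_self hd (hm _)⟩,
   fun s t u => uw_tri hd (hm s) (hm t) (hm u)⟩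

open scoped BoundedContinuousFunction in
lemma uw_top [Nonempty X] (hd : ∀ x y : X, dist x y ≤ 1) {S : Type} (m : S → Measure X)
    (hm : ∀ s, m s univ ≤ 1) (T : TopologicalSpace S)
    (hT : T = ⨅ f : X →ᵇ ℝ, TopologicalSpace.induced (fun s => ∫ x, f x ∂(m s)) inferInstance) :
    T = ballTop (fun s t => uwDist dist (m s) (m t)) ∧ SecondCountableTopology S := by
  let Φ : S → (ℕ × ℕ → ℝ) := fun s p => ∫ x, Fam X p.1 p.2 x ∂(m s)
  have hΦ : Continuous Φ := by
    rw [continuous_pi_iff]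
    intro p
    rw [continuous_iff_le_induced, hT]
    exact iInf_le _ (Fam X p.1 p.2)
  have a1 := continuous_iff_le_induced.1 hΦ
  let TΦ : TopologicalSpace S := TopologicalSpace.induced Φ inferInstance
  have a2 : TΦ ≤ ballTop (fun s t => uwDist dist (m s) (m t)) := by
    apply le_generateFrom
    rintro U ⟨s, r, hr, rfl⟩
    rw [isOpen_iff_mem_nhds]
    intro t ht
    obtain ⟨k, N, δ, hδ, H⟩ := nb hd (hm t) (sub_pos.2 ht)
    have hc : Continuous Φ := continuous_induced_dom
    have : ∀ᶠ u in 𝓝 t, ∀ j ∈ Finset.range (N + 1), |Φ t (k, j) - Φ u (k, j)| < δ := by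
      rw [Filter.eventually_all_finset]
      intro j _
      have hcj : Continuous fun u => |Φ t (k, j) - Φ u (k, j)| :=
        (continuous_const.sub ((continuous_apply (k, j)).comp hc)).abs
      exact hcj.continuousAt.eventually_lt continuousAt_const (by simpa using hδ)
    filter_upwards [this] with u hu
    have h1 := H (m u) (hm u) fun j hj => hu j (by simpa [Nat.lt_succ_iff] using hj)
    have h2 := uw_tri hd (hm s) (hm t) (hm u)
    show uwDist dist (m s) (m u) < r
    linarith
  have a3 : ballTop (fun s t => uwDist dist (m s) (m t)) ≤ T := by
    rw [hT]
    refine le_iInf fun f => ?_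
    rw [← continuous_iff_le_induced]
    letI := ballTop (fun s t => uwDist dist (m s) (m t))
    rw [continuous_iff_continuousAt]
    intro s
    rw [ContinuousAt, Metric.tendsto_nhds]
    intro ε hε
    obtain ⟨δ, hδ, H⟩ := test_fun f (hm s) hε hd
    have ho : IsOpen {t | uwDist dist (m s) (m t) < δ} :=
      TopologicalSpace.isOpen_generateFrom_of_mem ⟨s, δ, hδ, rfl⟩
    filter_upwards [ho.mem_nhds (by simpa [uw_self hd (hm s)] using hδ)] with t ht
    rw [dist_comm, Real.dist_eq]
    exact H (m t) (hm t) (uwDist_lt hd (hm s) (hm t) ht)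
  refine ⟨le_antisymm (a1.trans a2) a3, ?_⟩
  have : T = TΦ := le_antisymm a1 (a2.trans a3)
  rw [this]
  exact TopologicalSpace.secondCountableTopology_induced _ _ _

lemma wass_eq {μ ν : Measure X} (hμ : IsProbabilityMeasure μ) (hν : IsProbabilityMeasure ν) :
    wassersteinDist dist μ ν = uwDist dist μ ν := by
  unfold uwDist uwAux wassersteinDist
  rw [if_pos (by simp)]
  simp only [measure_univ, sub_self, zero_add]
  congr 1
  ext r
  constructor
  · rintro ⟨γ, h1, h2, h3⟩
    refine ⟨γ, ?_, h1.le, h2, h3⟩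
    rw [← map_fst_univ, h1, measure_univ]
  · rintro ⟨γ, h0, h1, h2, h3⟩
    refine ⟨γ, ?_, h2, h3⟩
    have hu : γ univ = 1 := by rw [← map_snd_univ, h2, measure_univ]
    have : IsFiniteMeasure (γ.map Prod.fst) := isFiniteMeasure_of_le μ h1
    exact Measure.eq_of_le_of_measure_univ_eq h1 (by rw [map_fst_univ, hu, measure_univ])

end UW

lemma exists_metric {X : Type} (t : TopologicalSpace X) (d : X → X → ℝ) (hd : IsMetric d)
    (ht : t = ballTop d) : ∃ m : MetricSpace X, t = m.toUniformSpace.toTopologicalSpace ∧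
      d = m.dist := by
  obtain ⟨h0, h1, h2, h3⟩ := hd
  let m : MetricSpace X :=
    { dist := d
      dist_self := fun x => (h2 x x).2 rfl
      dist_comm := h1
      dist_triangle := h3
      eq_of_dist_eq_zero := fun {x y} h => (h2 x y).1 h }
  refine ⟨m, ?_, rfl⟩
  rw [ht]
  apply le_antisymm
  · intro U hU
    letI := ballTop d
    have hU' := Metric.isOpen_iff.1 hU
    rw [isOpen_iff_mem_nhds]
    intro x hx
    obtain ⟨r, hr, hr'⟩ := hU' x hx
    have ho : IsOpen {y | d x y < r} :=
      TopologicalSpace.isOpen_generateFrom_of_mem ⟨x, r, hr, rfl⟩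
    filter_upwards [ho.mem_nhds (show d x x < r by rw [(h2 x x).2 rfl]; exact hr)] with y hy
    exact hr' (show d y x < r by rw [h1]; exact hy)
  · apply le_generateFrom
    rintro U ⟨x, r, hr, rfl⟩
    have : {y | d x y < r} = Metric.ball x r := by
      ext y
      rw [Metric.mem_ball, dist_comm]; rfl
    rw [this]
    exact Metric.isOpen_ball

open scoped BoundedContinuousFunction in
lemma gen {X : Type} [t : TopologicalSpace X] [MeasurableSpace X] [BorelSpace X] [Nonempty X]
    [SecondCountableTopology X] (d : X → X → ℝ) (hd : IsMetric d) (h1 : ∀ x y, d x y ≤ 1)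
    (ht : t = ballTop d) {S : Type} (m : S → Measure X)
    (hm : ∀ s, m s univ ≤ 1) (inj : Function.Injective m) (T : TopologicalSpace S)
    (hT : T = ⨅ f : X →ᵇ ℝ, TopologicalSpace.induced (fun s => ∫ x, f x ∂(m s)) inferInstance) :
    IsMetric (fun s t => uwDist d (m s) (m t)) ∧ (∀ s t, uwDist d (m s) (m t) ≤ 1) ∧
    T = ballTop (fun s t => uwDist d (m s) (m t)) ∧ SecondCountableTopology S ∧
    (∀ s t, IsProbabilityMeasure (m s) → IsProbabilityMeasure (m t) →
      wassersteinDist d (m s) (m t) = uwDist d (m s) (m t)) := by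
  obtain ⟨M, hM, hdM⟩ := exists_metric t d hd ht
  subst hM
  subst hdM
  obtain ⟨b1, b2⟩ := uw_top h1 m hm T hT
  exact ⟨uw_metric h1 m hm inj, fun s t => uwDist_le h1 (hm s) (hm t) zero_le_one
    (by simpa using Bd_one (hm s) (hm t)), b1, b2, fun s t p q => wass_eq p q⟩

lemma M_all (h : ℕ) : IsMetric (Wdist h) ∧ (∀ x y, Wdist h x y ≤ 1) ∧
    (inferInstance : TopologicalSpace (M h)) = ballTop (Wdist h) ∧
    SecondCountableTopology (M h) ∧ Nonempty (M h) := by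
  induction h with
  | zero =>
    have hs : Subsingleton (M 0) := inferInstanceAs (Subsingleton Unit)
    refine ⟨⟨fun _ _ => le_rfl, fun _ _ => rfl, fun x y => ⟨fun _ => Subsingleton.elim _ _,
      fun _ => rfl⟩, fun _ _ _ => by simp [Wdist]⟩, fun _ _ => by simp [Wdist],
      Subsingleton.elim _ _, ?_, ⟨(() : Unit)⟩⟩
    exact inferInstanceAs (SecondCountableTopology Unit)
  | succ h ih =>
    obtain ⟨i1, i2, i3, i4, i5⟩ := ih
    obtain ⟨j1, j2, j3, j4, -⟩ := gen (Wdist h) i1 i2 i3 (S := M (h + 1)) toMeas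
      (fun s => (toSub s).2) (fun s t hst => Subtype.ext hst) inferInstance rfl
    exact ⟨j1, j2, j3, j4, ⟨ofSub ⟨0, by simp⟩⟩⟩

/-- For every `h`, the unbalanced Wasserstein metric `W^h` is a well-defined metric on
`M h` metrizing its weak topology, and the induced Wasserstein metric `δW^h` on Borel
probability measures on `M h` is a well-defined metric metrizing the weak topology. -/
theorem wasserstein_metrizes (h : ℕ) :
    IsMetric (Wdist h) ∧
    (inferInstance : TopologicalSpace (M h)) = ballTop (Wdist h) ∧
    IsMetric (fun μ ν : ProbM (M h) => wassersteinDist (Wdist h) μ.val ν.val) ∧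
    probWeakTop (M h) =
      ballTop (fun μ ν : ProbM (M h) => wassersteinDist (Wdist h) μ.val ν.val) := by
  obtain ⟨i1, i2, i3, i4, i5⟩ := M_all h
  obtain ⟨j1, -, j3, -, j5⟩ := gen (Wdist h) i1 i2 i3 (S := ProbM (M h)) (fun μ => μ.val)
    (fun s => s.2.measure_univ.le) Subtype.val_injective (probWeakTop (M h)) rfl
  have e : (fun μ ν : ProbM (M h) => wassersteinDist (Wdist h) μ.val ν.val) =
      fun μ ν : ProbM (M h) => uwDist (Wdist h) μ.val ν.val := by
    funext μ ν
    exact j5 μ ν μ.2 ν.2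
  rw [e]
  exact ⟨i1, i3, j1, j3⟩

end
end

section
/- Let (S,d) be a complete separable metric space in which any two elements have distance at most one, and let μ,ν ∈ M_{≤1}(S). Then the classical Wasserstein distance between the probability measures μ* and ν* on the augmented space (S*, d*) equals the unbalanced Wasserstein distance W(μ,ν). -/
open MeasureTheory Set

noncomputable section

/-- The metric `d*` on the augmented space `S* = S ∪ {*}` (realized as `S ⊕ Unit`):
it extends `d`, the new point has distance one to all points of `S`. -/
def dStar {S : Type} [MetricSpace S] : (S ⊕ Unit) → (S ⊕ Unit) → ℝ
  | Sum.inl x, Sum.inl y => dist x y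
  | Sum.inl _, Sum.inr _ => 1
  | Sum.inr _, Sum.inl _ => 1
  | Sum.inr _, Sum.inr _ => 0

/-- The probability measure `μ*` on `S*` obtained from `μ` by putting the missing
mass `1 - ‖μ‖` on the new point `*`. -/
def starMeasure {S : Type} [MeasurableSpace S] (μ : Measure S) : Measure (S ⊕ Unit) :=
  μ.map Sum.inl + (1 - μ Set.univ) • Measure.dirac (Sum.inr ())

def glue4 {S : Type} [MeasurableSpace S] (A : Measure (S × S)) (B : Measure (S × Unit))
    (C : Measure (Unit × S)) (D : Measure (Unit × Unit)) : Measure ((S ⊕ Unit) × (S ⊕ Unit)) :=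
  A.map (Prod.map Sum.inl Sum.inl) + B.map (Prod.map Sum.inl Sum.inr)
    + C.map (Prod.map Sum.inr Sum.inl) + D.map (Prod.map Sum.inr Sum.inr)

def glue2 {S : Type} [MeasurableSpace S] (a : Measure S) (b : Measure Unit) : Measure (S ⊕ Unit) :=
  a.map Sum.inl + b.map Sum.inr

lemma emb_inl {S T : Type} [MeasurableSpace S] [MeasurableSpace T] :
    MeasurableEmbedding (Sum.inl : S → S ⊕ T) :=
  ⟨Sum.inl_injective, measurable_inl, fun _ hs => hs.inl_image⟩
lemma emb_inr {S T : Type} [MeasurableSpace S] [MeasurableSpace T] :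
    MeasurableEmbedding (Sum.inr : T → S ⊕ T) :=
  ⟨Sum.inr_injective, measurable_inr, fun _ hs => measurableSet_inr_image.2 hs⟩

lemma glue2_inj {S : Type} [MeasurableSpace S] {a a' : Measure S} {b b' : Measure Unit}
    (h : glue2 a b = glue2 a' b') : a = a' ∧ b = b' := by
  constructor
  · ext s hs
    have := congrArg (fun m => m (Sum.inl '' s)) h
    simpa [glue2, emb_inl.map_apply, emb_inr.map_apply, Set.preimage_image_eq _ Sum.inl_injective,
      Set.preimage_inr_image_inl] using this
  · ext s hs
    have := congrArg (fun m => m (Sum.inr '' s)) h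
    simpa [glue2, emb_inl.map_apply, emb_inr.map_apply, Set.preimage_image_eq _ Sum.inr_injective,
      Set.preimage_inl_image_inr] using this

lemma starMeasure_eq {S : Type} [MeasurableSpace S] (μ : Measure S) :
    starMeasure μ = glue2 μ ((1 - μ Set.univ) • Measure.dirac ()) := by
  simp [starMeasure, glue2, Measure.map_smul, Measure.map_dirac' measurable_inr]

lemma glue4_fst {S : Type} [MeasurableSpace S] (A : Measure (S × S)) (B : Measure (S × Unit))
    (C : Measure (Unit × S)) (D : Measure (Unit × Unit)) :
    (glue4 A B C D).map Prod.fst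
      = glue2 (A.map Prod.fst + B.map Prod.fst) (C.map Prod.fst + D.map Prod.fst) := by
  have h1 := measurable_inl (α := S) (β := Unit)
  have h2 := measurable_inr (α := S) (β := Unit)
  simp only [glue4, glue2]
  rw [Measure.map_add _ _ measurable_fst, Measure.map_add _ _ measurable_fst,
    Measure.map_add _ _ measurable_fst, Measure.map_add _ _ h1, Measure.map_add _ _ h2]
  rw [Measure.map_map (by fun_prop) (by fun_prop), Measure.map_map (by fun_prop) (by fun_prop),
    Measure.map_map (by fun_prop) (by fun_prop), Measure.map_map (by fun_prop) (by fun_prop),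
    Measure.map_map (by fun_prop) (by fun_prop), Measure.map_map (by fun_prop) (by fun_prop),
    Measure.map_map (by fun_prop) (by fun_prop), Measure.map_map (by fun_prop) (by fun_prop)]
  rw [← add_assoc]
  rfl

lemma glue4_snd {S : Type} [MeasurableSpace S] (A : Measure (S × S)) (B : Measure (S × Unit))
    (C : Measure (Unit × S)) (D : Measure (Unit × Unit)) :
    (glue4 A B C D).map Prod.snd
      = glue2 (A.map Prod.snd + C.map Prod.snd) (B.map Prod.snd + D.map Prod.snd) := by
  have h1 := measurable_inl (α := S) (β := Unit)
  have h2 := measurable_inr (α := S) (β := Unit)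
  simp only [glue4, glue2]
  rw [Measure.map_add _ _ measurable_snd, Measure.map_add _ _ measurable_snd,
    Measure.map_add _ _ measurable_snd, Measure.map_add _ _ h1, Measure.map_add _ _ h2]
  rw [Measure.map_map (by fun_prop) (by fun_prop), Measure.map_map (by fun_prop) (by fun_prop),
    Measure.map_map (by fun_prop) (by fun_prop), Measure.map_map (by fun_prop) (by fun_prop),
    Measure.map_map (by fun_prop) (by fun_prop), Measure.map_map (by fun_prop) (by fun_prop),
    Measure.map_map (by fun_prop) (by fun_prop), Measure.map_map (by fun_prop) (by fun_prop)]
  rw [← add_assoc, add_right_comm (Measure.map _ A)]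
  rfl

lemma exists_glue4 {S : Type} [MeasurableSpace S] (γ : Measure ((S ⊕ Unit) × (S ⊕ Unit))) :
    ∃ A B C D, γ = glue4 A B C D := by
  have hl := emb_inl (S := S) (T := Unit)
  have hr := emb_inr (S := S) (T := Unit)
  refine ⟨γ.comap (Prod.map Sum.inl Sum.inl), γ.comap (Prod.map Sum.inl Sum.inr),
    γ.comap (Prod.map Sum.inr Sum.inl), γ.comap (Prod.map Sum.inr Sum.inr), ?_⟩
  unfold glue4
  rw [(hl.prodMap hl).map_comap, (hl.prodMap hr).map_comap, (hr.prodMap hl).map_comap,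
    (hr.prodMap hr).map_comap]
  rw [← Measure.restrict_union _ (hl.prodMap hr).measurableSet_range,
    ← Measure.restrict_union _ (hr.prodMap hl).measurableSet_range,
    ← Measure.restrict_union _ (hr.prodMap hr).measurableSet_range]
  · symm
    convert Measure.restrict_univ
    ext ⟨x, y⟩
    rcases x with x | x <;> rcases y with y | y <;> simp
  all_goals
    rw [Set.disjoint_left]
    rintro ⟨x, y⟩
    rcases x with x | x <;> rcases y with y | y <;> simp

lemma int_dist {S : Type} [MetricSpace S]
    [TopologicalSpace.SeparableSpace S] [MeasurableSpace S] [BorelSpace S]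
    (hd : ∀ x y : S, dist x y ≤ 1) (A : Measure (S × S)) [IsFiniteMeasure A] :
    Integrable (fun p : S × S => dist p.1 p.2) A := by
  have : SecondCountableTopology S := UniformSpace.secondCountable_of_separable S
  refine Integrable.of_bound (C := 1) (by
    exact (measurable_fst.dist measurable_snd).aestronglyMeasurable) ?_
  filter_upwards with p
  rw [Real.norm_of_nonneg dist_nonneg]
  exact hd _ _

lemma glue4_cost {S : Type} [MetricSpace S]
    [TopologicalSpace.SeparableSpace S] [MeasurableSpace S] [BorelSpace S]
    (hd : ∀ x y : S, dist x y ≤ 1) (A : Measure (S × S)) (B : Measure (S × Unit))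
    (C : Measure (Unit × S)) (D : Measure (Unit × Unit)) [IsFiniteMeasure A] [IsFiniteMeasure B]
    [IsFiniteMeasure C] [IsFiniteMeasure D] :
    ∫ p, dStar p.1 p.2 ∂(glue4 A B C D)
      = ∫ p, dist p.1 p.2 ∂A + (B univ).toReal + (C univ).toReal := by
  have hl := emb_inl (S := S) (T := Unit)
  have hr := emb_inr (S := S) (T := Unit)
  have iA : Integrable (fun p : (S ⊕ Unit) × (S ⊕ Unit) => dStar p.1 p.2)
      (A.map (Prod.map Sum.inl Sum.inl)) :=
    (hl.prodMap hl).integrable_map_iff.2 (int_dist hd A)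
  have iB : Integrable (fun p : (S ⊕ Unit) × (S ⊕ Unit) => dStar p.1 p.2)
      (B.map (Prod.map Sum.inl Sum.inr)) :=
    (hl.prodMap hr).integrable_map_iff.2 (integrable_const (1:ℝ))
  have iC : Integrable (fun p : (S ⊕ Unit) × (S ⊕ Unit) => dStar p.1 p.2)
      (C.map (Prod.map Sum.inr Sum.inl)) :=
    (hr.prodMap hl).integrable_map_iff.2 (integrable_const (1:ℝ))
  have iD : Integrable (fun p : (S ⊕ Unit) × (S ⊕ Unit) => dStar p.1 p.2)
      (D.map (Prod.map Sum.inr Sum.inr)) :=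
    (hr.prodMap hr).integrable_map_iff.2 (integrable_const (0:ℝ))
  unfold glue4
  rw [integral_add_measure ((iA.add_measure iB).add_measure iC) iD,
    integral_add_measure (iA.add_measure iB) iC, integral_add_measure iA iB,
    (hl.prodMap hl).integral_map, (hl.prodMap hr).integral_map, (hr.prodMap hl).integral_map,
    (hr.prodMap hr).integral_map]
  simp [dStar, Measure.real]

lemma dStar_nonneg {S : Type} [MetricSpace S] (x y : S ⊕ Unit) : 0 ≤ dStar x y := by
  rcases x with x | x <;> rcases y with y | y <;> simp [dStar]

lemma dStar_comm {S : Type} [MetricSpace S] (x y : S ⊕ Unit) : dStar x y = dStar y x := by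
  rcases x with x | x <;> rcases y with y | y <;> simp [dStar, dist_comm]

lemma star_univ {S : Type} [MeasurableSpace S] (μ : Measure S) (hμ : μ Set.univ ≤ 1) :
    starMeasure μ univ = 1 := by
  simp [starMeasure, Measure.map_apply measurable_inl, add_tsub_cancel_of_le hμ]

lemma wass_comm {S : Type} [MetricSpace S] [MeasurableSpace S] (μ ν : Measure (S ⊕ Unit)) :
    wassersteinDist dStar μ ν = wassersteinDist dStar ν μ := by
  have key : ∀ μ ν : Measure (S ⊕ Unit), ∀ r : ℝ, (∃ γ : Measure ((S ⊕ Unit) × (S ⊕ Unit)),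
      γ.map Prod.fst = μ ∧ γ.map Prod.snd = ν ∧ r = ∫ p, dStar p.1 p.2 ∂γ) →
      (∃ γ : Measure ((S ⊕ Unit) × (S ⊕ Unit)),
      γ.map Prod.fst = ν ∧ γ.map Prod.snd = μ ∧ r = ∫ p, dStar p.1 p.2 ∂γ) := by
    rintro μ ν r ⟨γ, h1, h2, h3⟩
    refine ⟨γ.map Prod.swap, ?_, ?_, ?_⟩
    · rw [Measure.map_map measurable_fst measurable_swap, ← h2]; rfl
    · rw [Measure.map_map measurable_snd measurable_swap, ← h1]; rfl
    · rw [h3]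
      have := (MeasurableEquiv.prodComm (α := S ⊕ Unit) (β := S ⊕ Unit)).measurableEmbedding.integral_map
        (μ := γ) (fun p => dStar p.1 p.2)
      rw [show (Prod.swap : (S ⊕ Unit) × (S ⊕ Unit) → _) = MeasurableEquiv.prodComm from rfl, this]
      congr 1; ext p; exact dStar_comm _ _
  unfold wassersteinDist
  congr 1; ext r
  exact ⟨key _ _ _, key _ _ _⟩

lemma map_univ' {X Y : Type} [MeasurableSpace X] [MeasurableSpace Y] (m : Measure X) {f : X → Y}
    (hf : Measurable f) : (m.map f) univ = m univ := by
  rw [Measure.map_apply hf MeasurableSet.univ, preimage_univ]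

/-- lower direction -/
lemma lower_aux {S : Type} [MetricSpace S]
    [TopologicalSpace.SeparableSpace S] [MeasurableSpace S] [BorelSpace S]
    (hd : ∀ x y : S, dist x y ≤ 1)
    (μ ν : Measure S) (hμ : μ Set.univ ≤ 1) (hν : ν Set.univ ≤ 1) (h : ν univ ≤ μ univ)
    (Γ : Measure ((S ⊕ Unit) × (S ⊕ Unit))) (h1 : Γ.map Prod.fst = starMeasure μ)
    (h2 : Γ.map Prod.snd = starMeasure ν) :
    ∃ γ : Measure (S × S), γ Set.univ ≤ 1 ∧
      γ.map Prod.fst ≤ μ ∧ γ.map Prod.snd = ν ∧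
      (μ univ).toReal - (ν univ).toReal + ∫ p, dist p.1 p.2 ∂γ ≤ ∫ p, dStar p.1 p.2 ∂Γ := by
  obtain ⟨A, B, C, D, rfl⟩ := exists_glue4 Γ
  rw [glue4_fst, starMeasure_eq] at h1
  rw [glue4_snd, starMeasure_eq] at h2
  obtain ⟨h1, h1'⟩ := glue2_inj h1
  obtain ⟨h2, h2'⟩ := glue2_inj h2
  have e1 : A univ + B univ = μ univ := by
    rw [← h1, Measure.add_apply, map_univ' _ measurable_fst, map_univ' _ measurable_fst]
  have e2 : A univ + C univ = ν univ := by
    rw [← h2, Measure.add_apply, map_univ' _ measurable_snd, map_univ' _ measurable_snd]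
  have e3 : C univ + D univ = 1 - μ univ := by
    have := congrArg (fun m => m univ) h1'
    simpa [map_univ' _ measurable_fst] using this
  have hA : A univ ≠ ⊤ := ne_top_of_le_ne_top ENNReal.one_ne_top
    ((le_self_add.trans e1.le).trans hμ)
  have hB : B univ ≠ ⊤ := ne_top_of_le_ne_top ENNReal.one_ne_top
    ((le_add_self.trans e1.le).trans hμ)
  have hC : C univ ≠ ⊤ := ne_top_of_le_ne_top ENNReal.one_ne_top
    ((le_add_self.trans e2.le).trans hν)
  have hD : D univ ≠ ⊤ := ne_top_of_le_ne_top ENNReal.one_ne_top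
    ((le_add_self.trans e3.le).trans tsub_le_self)
  have : IsFiniteMeasure A := ⟨hA.lt_top⟩
  have : IsFiniteMeasure B := ⟨hB.lt_top⟩
  have : IsFiniteMeasure C := ⟨hC.lt_top⟩
  have : IsFiniteMeasure D := ⟨hD.lt_top⟩
  rw [glue4_cost hd]
  have hCB : C univ ≤ B univ := by
    rw [← e1, ← e2] at h
    exact (ENNReal.add_le_add_iff_left hA).1 h
  have e1' : (μ univ).toReal = (A univ).toReal + (B univ).toReal := by
    rw [← e1, ENNReal.toReal_add hA hB]
  have e2' : (ν univ).toReal = (A univ).toReal + (C univ).toReal := by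
    rw [← e2, ENNReal.toReal_add hA hC]
  obtain ⟨E, hEf, hEs⟩ : ∃ E : Measure (S × S), E.map Prod.fst ≤ B.map Prod.fst ∧
      E.map Prod.snd = C.map Prod.snd := by
    by_cases hB0 : B univ = 0
    · have hC0 : C = 0 := by
        rw [← Measure.measure_univ_eq_zero]; exact le_antisymm (hB0 ▸ hCB) bot_le
      exact ⟨0, by rw [Measure.map_zero]; exact Measure.zero_le _, by simp [hC0]⟩
    · refine ⟨(B univ)⁻¹ • (B.map Prod.fst).prod (C.map Prod.snd), ?_, ?_⟩
      · rw [Measure.map_smul, Measure.map_fst_prod, map_univ' _ measurable_snd, smul_smul]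
        intro s
        rw [Measure.smul_apply, smul_eq_mul]
        calc _ ≤ 1 * (Measure.map Prod.fst B) s := by
              gcongr
              calc (B univ)⁻¹ * C univ ≤ (B univ)⁻¹ * B univ := by gcongr
                _ ≤ 1 := ENNReal.inv_mul_le_one _
          _ = _ := one_mul _
      · rw [Measure.map_smul, Measure.map_snd_prod, map_univ' _ measurable_fst, smul_smul,
          ENNReal.inv_mul_cancel hB0 hB, one_smul]
  have hE : E univ = C univ := by
    rw [← map_univ' E measurable_snd, hEs, map_univ' _ measurable_snd]
  have : IsFiniteMeasure E := ⟨hE ▸ hC.lt_top⟩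
  refine ⟨A + E, ?_, ?_, ?_, ?_⟩
  · rw [Measure.add_apply, hE, e2]; exact hν
  · rw [Measure.map_add _ _ measurable_fst, ← h1]
    gcongr
  · rw [Measure.map_add _ _ measurable_snd, ← h2, hEs]
  · rw [integral_add_measure (int_dist hd A) (int_dist hd E), e1', e2']
    have : ∫ p, dist p.1 p.2 ∂E ≤ (C univ).toReal := by
      calc _ ≤ ∫ p : S × S, (1:ℝ) ∂E :=
            integral_mono (int_dist hd E) (integrable_const _) (fun p => hd _ _)
        _ = _ := by simp [Measure.real, hE]
    have := ENNReal.toReal_nonneg (a := C univ)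
    linarith

/-- upper direction -/
lemma upper_aux {S : Type} [MetricSpace S]
    [TopologicalSpace.SeparableSpace S] [MeasurableSpace S] [BorelSpace S]
    (hd : ∀ x y : S, dist x y ≤ 1)
    (μ ν : Measure S) (hμ : μ Set.univ ≤ 1) (hν : ν Set.univ ≤ 1) (h : ν univ ≤ μ univ)
    (γ : Measure (S × S)) (h1 : γ.map Prod.fst ≤ μ) (h2 : γ.map Prod.snd = ν) :
    ∃ Γ : Measure ((S ⊕ Unit) × (S ⊕ Unit)), Γ.map Prod.fst = starMeasure μ ∧
      Γ.map Prod.snd = starMeasure ν ∧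
      (μ univ).toReal - (ν univ).toReal + ∫ p, dist p.1 p.2 ∂γ = ∫ p, dStar p.1 p.2 ∂Γ := by
  have hγ : γ univ = ν univ := by rw [← h2, map_univ' _ measurable_snd]
  have hμt : μ univ ≠ ⊤ := ne_top_of_le_ne_top ENNReal.one_ne_top hμ
  have hνt : ν univ ≠ ⊤ := ne_top_of_le_ne_top ENNReal.one_ne_top hν
  have : IsFiniteMeasure μ := ⟨hμt.lt_top⟩
  have : IsFiniteMeasure γ := ⟨hγ ▸ hνt.lt_top⟩
  have hu : (μ - γ.map Prod.fst) univ = μ univ - ν univ := by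
    rw [Measure.sub_apply MeasurableSet.univ h1, map_univ' _ measurable_fst, hγ]
  have m1 : Measurable (fun x : S => (x, ())) := by fun_prop
  have hB : ((μ - γ.map Prod.fst).map (fun x => (x, ()))) univ = μ univ - ν univ := by
    rw [map_univ' _ m1, hu]
  have : IsFiniteMeasure ((1 - μ univ) • Measure.dirac ((), ()) : Measure (Unit × Unit)) :=
    ⟨by simpa using lt_of_le_of_lt tsub_le_self ENNReal.one_lt_top⟩
  refine ⟨glue4 γ ((μ - γ.map Prod.fst).map (fun x => (x, ()))) 0
    ((1 - μ univ) • Measure.dirac ((), ())), ?_, ?_, ?_⟩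
  · rw [glue4_fst, starMeasure_eq]
    congr 1
    · rw [Measure.map_map measurable_fst m1]
      rw [show (Prod.fst ∘ fun x : S => (x, ())) = id from rfl, Measure.map_id, add_comm,
        Measure.sub_add_cancel_of_le h1]
    · simp [Measure.map_smul, Measure.map_dirac' measurable_fst]
  · rw [glue4_snd, starMeasure_eq]
    congr 1
    · simp [h2]
    · rw [Measure.map_map measurable_snd m1, Measure.map_smul, Measure.map_dirac' measurable_snd]
      rw [show (Prod.snd ∘ fun x : S => (x, ())) = fun _ => () from rfl, Measure.map_const, hu,
        ← add_smul]
      congr 1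
      rw [add_comm]
      exact tsub_add_tsub_cancel hμ h
  · rw [glue4_cost hd, hB, ENNReal.toReal_sub_of_le h hμt]
    simp
    ring

lemma main_aux {S : Type} [MetricSpace S]
    [TopologicalSpace.SeparableSpace S] [MeasurableSpace S] [BorelSpace S]
    (hd : ∀ x y : S, dist x y ≤ 1)
    (μ ν : Measure S) (hμ : μ Set.univ ≤ 1) (hν : ν Set.univ ≤ 1) (h : ν univ ≤ μ univ) :
    wassersteinDist dStar (starMeasure μ) (starMeasure ν) = uwAux dist μ ν := by
  have p1 : IsProbabilityMeasure (starMeasure μ) := ⟨star_univ μ hμ⟩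
  have p2 : IsProbabilityMeasure (starMeasure ν) := ⟨star_univ ν hν⟩
  have f1 : ((starMeasure μ).prod (starMeasure ν)).map Prod.fst = starMeasure μ := by
    simp [Measure.map_fst_prod]
  have f2 : ((starMeasure μ).prod (starMeasure ν)).map Prod.snd = starMeasure ν := by
    simp [Measure.map_snd_prod]
  unfold wassersteinDist uwAux
  apply le_antisymm
  · rw [← sub_le_iff_le_add']
    apply le_csInf
    · obtain ⟨γ, a, b, c, -⟩ := lower_aux hd μ ν hμ hν h _ f1 f2
      exact ⟨_, γ, a, b, c, rfl⟩
    · rintro r ⟨γ, a, b, c, rfl⟩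
      obtain ⟨Γ, g1, g2, g3⟩ := upper_aux hd μ ν hμ hν h γ b c
      rw [sub_le_iff_le_add', g3]
      refine csInf_le ⟨0, ?_⟩ ⟨Γ, g1, g2, rfl⟩
      rintro r ⟨Γ, -, -, rfl⟩
      exact integral_nonneg fun p => dStar_nonneg _ _
  · apply le_csInf
    · exact ⟨_, _, f1, f2, rfl⟩
    · rintro r ⟨Γ, a, b, rfl⟩
      obtain ⟨γ, g1, g2, g3, g4⟩ := lower_aux hd μ ν hμ hν h Γ a b
      refine le_trans ?_ g4
      gcongr
      refine csInf_le ⟨0, ?_⟩ ⟨γ, g1, g2, g3, rfl⟩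
      rintro r ⟨Γ, -, -, -, rfl⟩
      exact integral_nonneg fun p => dist_nonneg

/-- On a complete separable metric space of diameter at most one, the classical
Wasserstein distance of the augmented probability measures `μ*` and `ν*` on `(S*, d*)`
equals the unbalanced Wasserstein distance `W(μ,ν)`. -/
theorem wasserstein_star_eq_unbalanced {S : Type} [MetricSpace S] [CompleteSpace S]
    [TopologicalSpace.SeparableSpace S] [MeasurableSpace S] [BorelSpace S]
    (hd : ∀ x y : S, dist x y ≤ 1)
    (μ ν : Measure S) (hμ : μ Set.univ ≤ 1) (hν : ν Set.univ ≤ 1) :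
    wassersteinDist dStar (starMeasure μ) (starMeasure ν) = uwDist dist μ ν := by
  unfold uwDist
  split_ifs with h
  · exact main_aux hd μ ν hμ hν h
  · rw [wass_comm]
    exact main_aux hd ν μ hν hμ (le_of_not_ge h)

end
end

section
/- Let (S,d) be a complete separable metric space in which any two elements have distance at most one. Then for all μ,ν ∈ M_{≤1}(S): BL(μ,ν) ≤ K(μ,ν) ≤ W(μ,ν) ≤ 2·P(μ,ν) ≤ 4·√(BL(μ,ν)). -/
open MeasureTheory Set

noncomputable section

/-- The open `ε`-thickening `A^ε` of a set w.r.t. a distance function. -/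
def thicken {X : Type _} (d : X → X → ℝ) (ε : ℝ) (A : Set X) : Set X :=
  {y | ∃ x ∈ A, d x y < ε}

/-- The Prokhorov distance of two measures w.r.t. a distance function `d`. -/
def prokhorovDist {X : Type _} [MeasurableSpace X] (d : X → X → ℝ)
    (μ ν : Measure X) : ℝ :=
  sInf {ε : ℝ | 0 < ε ∧ ∀ A : Set X, MeasurableSet A →
    μ A ≤ ν (thicken d ε A) + ENNReal.ofReal ε ∧
    ν A ≤ μ (thicken d ε A) + ENNReal.ofReal ε}


/-- The Kantorovich–Rubinshtein distance: the supremum of `|∫ f dμ - ∫ f dν|` over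
all `f` with Lipschitz constant at most one and sup norm at most one. -/
def krDist {S : Type} [MetricSpace S] [MeasurableSpace S] (μ ν : Measure S) : ℝ :=
  sSup {r : ℝ | ∃ f : S → ℝ, LipschitzWith 1 f ∧ (∀ x, |f x| ≤ 1) ∧
    r = |∫ x, f x ∂μ - ∫ x, f x ∂ν|}

/-- The bounded-Lipschitz distance: the supremum of `|∫ f dμ - ∫ f dν|` over all `f`
with `‖f‖_L + ‖f‖_∞ ≤ 1`. -/
def blDist {S : Type} [MetricSpace S] [MeasurableSpace S] (μ ν : Measure S) : ℝ :=
  sSup {r : ℝ | ∃ (f : S → ℝ) (a b : NNReal), LipschitzWith a f ∧ (∀ x, |f x| ≤ b) ∧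
    (a : ℝ) + (b : ℝ) ≤ 1 ∧ r = |∫ x, f x ∂μ - ∫ x, f x ∂ν|}


theorem flow_aux {I : Type} [Fintype I] [DecidableEq I] (R : I → I → Prop)
    (a b : I → ℝ) (ha : ∀ i, 0 ≤ a i) (hb : ∀ i, 0 ≤ b i) (D : ℝ) (hD : 0 ≤ D)
    (h : ∀ J : Finset I, ∀ J' : Finset I, (∀ j, j ∈ J' ↔ ∃ i ∈ J, R i j) →
      ∑ i ∈ J, a i ≤ ∑ j ∈ J', b j + D) (δ : ℝ) (hδ : 0 < δ) :
    ∃ g : I → I → ℝ, (∀ i j, 0 ≤ g i j) ∧ (∀ i j, ¬ R i j → g i j = 0) ∧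
      (∀ i, ∑ j, g i j ≤ a i) ∧ (∀ j, ∑ i, g i j ≤ b j) ∧
      ∑ i, a i ≤ ∑ i, ∑ j, g i j + D + δ := by
  classical
  obtain ⟨N, hN⟩ := exists_nat_gt ((2 * (Fintype.card I : ℝ) + 1) / δ)
  have hN0 : (0 : ℝ) < N := lt_of_le_of_lt (by positivity) hN
  rw [div_lt_iff₀ hδ] at hN
  set α : I → ℕ := fun i => ⌊N * a i⌋₊ with hα
  set β : I → ℕ := fun i => ⌊N * b i⌋₊ with hβ
  set K : ℕ := Fintype.card I + ⌈N * D⌉₊ with hK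
  have hα1 : ∀ i, (α i : ℝ) ≤ N * a i := fun i =>
    Nat.floor_le (mul_nonneg hN0.le (ha i))
  have hα2 : ∀ i, N * a i ≤ (α i : ℝ) + 1 := fun i => (Nat.lt_floor_add_one _).le
  have hβ1 : ∀ i, (β i : ℝ) ≤ N * b i := fun i =>
    Nat.floor_le (mul_nonneg hN0.le (hb i))
  have hβ2 : ∀ i, N * b i ≤ (β i : ℝ) + 1 := fun i => (Nat.lt_floor_add_one _).le
  let ι := (i : I) × Fin (α i)
  let T := ((j : I) × Fin (β j)) ⊕ Fin K
  let τ : T → Option I := fun y => Sum.elim (fun z => some z.1) (fun _ => none) y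
  let t : ι → Finset T := fun x => Finset.univ.filter (fun y => ∀ j, τ y = some j → R x.1 j)
  have hall : ∀ s : Finset ι, s.card ≤ (s.biUnion t).card := by
    intro s
    rcases s.eq_empty_or_nonempty with rfl | hs
    · simp
    obtain ⟨x0, hx0⟩ := hs
    let J : Finset I := Finset.image (fun x : ι => x.1) s
    let J' : Finset I := Finset.univ.filter (fun j => ∃ i ∈ J, R i j)
    have h1 : s ⊆ J.sigma (fun _ => Finset.univ) := by
      intro x hx
      rw [Finset.mem_sigma]; refine ⟨?_, Finset.mem_univ _⟩
      exact Finset.mem_image_of_mem (fun x : ι => x.1) hx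
    have h2 : (J'.sigma (fun j => (Finset.univ : Finset (Fin (β j))))).disjSum
        (Finset.univ : Finset (Fin K)) ⊆ s.biUnion t := by
      intro y hy
      rw [Finset.mem_disjSum] at hy
      rw [Finset.mem_biUnion]
      rcases hy with ⟨z, hz, rfl⟩ | ⟨z, hz, rfl⟩
      · simp only [Finset.mem_sigma, Finset.mem_univ, and_true, J', Finset.mem_filter, J,
          true_and, Finset.mem_image] at hz
        obtain ⟨i, ⟨x, hx, rfl⟩, hR⟩ := hz
        refine ⟨x, hx, ?_⟩
        simp only [t, τ, Finset.mem_filter, Finset.mem_univ, true_and, Sum.elim_inl,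
          Option.some.injEq]
        rintro j rfl; exact hR
      · exact ⟨x0, hx0, by simp [t, τ]⟩
    have c1 := Finset.card_le_card h1
    have c2 := Finset.card_le_card h2
    rw [Finset.card_sigma] at c1
    rw [Finset.card_disjSum, Finset.card_sigma] at c2
    simp only [Finset.card_univ, Fintype.card_fin] at c1 c2
    refine c1.trans (le_trans ?_ c2)
    have hJ := h J J' (by intro j; simp [J'])
    have : (∑ i ∈ J, (α i : ℝ)) ≤ ∑ j ∈ J', (β j : ℝ) + K := by
      calc (∑ i ∈ J, (α i : ℝ)) ≤ ∑ i ∈ J, N * a i := Finset.sum_le_sum fun i _ => hα1 i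
        _ = N * ∑ i ∈ J, a i := by rw [Finset.mul_sum]
        _ ≤ N * (∑ j ∈ J', b j + D) := by gcongr
        _ = ∑ j ∈ J', N * b j + N * D := by rw [mul_add, Finset.mul_sum]
        _ ≤ ∑ j ∈ J', ((β j : ℝ) + 1) + ⌈N * D⌉₊ :=
            add_le_add (Finset.sum_le_sum fun i _ => hβ2 i) (Nat.le_ceil _)
        _ = ∑ j ∈ J', (β j : ℝ) + J'.card + ⌈N * D⌉₊ := by
            rw [Finset.sum_add_distrib]; simp
        _ ≤ ∑ j ∈ J', (β j : ℝ) + K := by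
            have : (J'.card : ℝ) ≤ Fintype.card I := by exact_mod_cast Finset.card_le_univ _
            rw [hK]; push_cast; linarith
    exact_mod_cast this
  obtain ⟨f, hf, hft⟩ := (Finset.all_card_le_biUnion_card_iff_exists_injective t).1 hall
  let n : I → I → ℕ := fun i j => ∑ k : Fin (α i), if τ (f ⟨i, k⟩) = some j then 1 else 0
  have hrow : ∀ i, ∑ j, n i j ≤ α i := by
    intro i
    simp only [n]
    rw [Finset.sum_comm]
    calc _ ≤ ∑ k : Fin (α i), 1 := by
          refine Finset.sum_le_sum fun k _ => ?_
          rcases τ (f ⟨i, k⟩) with _ | j0 <;> simp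
      _ = α i := by simp
  have hcol : ∀ j, ∑ i, n i j ≤ β j := by
    intro j
    simp only [n]
    rw [← Fintype.sum_sigma' (fun (i : I) (k : Fin (α i)) => if τ (f ⟨i, k⟩) = some j then 1 else 0)]
    rw [Finset.sum_boole]
    simp only [Nat.cast_id]
    calc _ ≤ (({j} : Finset I).sigma (fun j => (Finset.univ : Finset (Fin (β j))))
              |>.map ⟨(Sum.inl : _ → T), Sum.inl_injective⟩).card := by
          refine Finset.card_le_card_of_injOn f ?_ hf.injOn
          intro x hx
          simp only [Finset.coe_filter, Finset.mem_univ, true_and, Set.mem_ofPred_eq] at hx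
          have hx' : τ (f x) = some j := hx
          rcases hfx : f x with z | z
          · rw [hfx] at hx'
            simp only [τ, Sum.elim_inl, Option.some.injEq] at hx'
            simp [hx']
          · rw [hfx] at hx'
            simp [τ] at hx'
      _ = β j := by simp
  have htot : ∑ i, α i ≤ ∑ i, ∑ j, n i j + K := by
    have e1 : ∑ i, ∑ j, n i j = ∑ x : ι, if τ (f x) = none then 0 else 1 := by
      rw [Fintype.sum_sigma]
      refine Finset.sum_congr rfl fun i _ => ?_
      simp only [n]
      rw [Finset.sum_comm]
      refine Finset.sum_congr rfl fun k _ => ?_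
      rcases τ (f ⟨i, k⟩) with _ | j0 <;> simp
    have e2 : (∑ x : ι, if τ (f x) = none then 1 else 0) ≤ K := by
      rw [Finset.sum_boole]
      simp only [Nat.cast_id]
      calc _ ≤ ((Finset.univ : Finset (Fin K)).map
            ⟨(Sum.inr : _ → T), Sum.inr_injective⟩).card := by
            refine Finset.card_le_card_of_injOn f ?_ hf.injOn
            intro x hx
            simp only [Finset.coe_filter, Finset.mem_univ, true_and, Set.mem_ofPred_eq] at hx
            rcases hfx : f x with z | z
            · rw [hfx] at hx
              simp [τ] at hx
            · simp
        _ = K := by simp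
    have e3 : ∑ i, α i = ∑ x : ι, ((if τ (f x) = none then 0 else 1) +
        (if τ (f x) = none then 1 else 0)) := by
      trans ∑ x : ι, 1
      · rw [Fintype.sum_sigma]; simp
      · refine Finset.sum_congr rfl fun x _ => ?_
        split_ifs <;> rfl
    rw [e3, Finset.sum_add_distrib, e1]
    omega
  refine ⟨fun i j => (n i j : ℝ) / N, fun i j => by positivity, ?_, ?_, ?_, ?_⟩
  · intro i j hR
    have : n i j = 0 := by
      simp only [n]
      refine Finset.sum_eq_zero fun k _ => ?_
      rw [if_neg]
      intro hk
      have := hft ⟨i, k⟩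
      simp only [t, Finset.mem_filter, Finset.mem_univ, true_and] at this
      exact hR (this j hk)
    simp [this]
  · intro i
    rw [← Finset.sum_div, div_le_iff₀ hN0, mul_comm]
    exact le_trans (by exact_mod_cast hrow i) (hα1 i)
  · intro i
    rw [← Finset.sum_div, div_le_iff₀ hN0, mul_comm]
    exact le_trans (by exact_mod_cast hcol i) (hβ1 i)
  · have e : ∑ i, ∑ j, (n i j : ℝ) / N = (∑ i, ∑ j, (n i j : ℝ)) / N := by
      rw [Finset.sum_div]; exact Finset.sum_congr rfl fun i _ => (Finset.sum_div _ _ _).symm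
    have htot' : ∑ i, (α i : ℝ) ≤ ∑ i, ∑ j, (n i j : ℝ) + K := by exact_mod_cast htot
    have h1 : N * ∑ i, a i ≤ ∑ i, (α i : ℝ) + Fintype.card I := by
      rw [Finset.mul_sum]
      calc _ ≤ ∑ i, ((α i : ℝ) + 1) := Finset.sum_le_sum fun i _ => hα2 i
        _ = _ := by rw [Finset.sum_add_distrib]; simp
    have h2 : (K : ℝ) ≤ Fintype.card I + (N * D + 1) := by
      rw [hK]; push_cast
      have := (Nat.ceil_lt_add_one (mul_nonneg hN0.le hD)).le
      linarith
    rw [e]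
    refine le_of_mul_le_mul_left ?_ hN0
    have : N * ((∑ i, ∑ j, (n i j : ℝ)) / N + D + δ) =
      (∑ i, ∑ j, (n i j : ℝ)) + N * D + N * δ := by field_simp
    rw [this]
    linarith

theorem build_aux {S : Type} [MeasurableSpace S] (μ ν : Measure S)
    [IsFiniteMeasure μ] [IsFiniteMeasure ν] {I : Type} [Fintype I] (B : I → Set S)
    (hB : ∀ i, MeasurableSet (B i)) (hdis : Pairwise fun i j => Disjoint (B i) (B j))
    (g : I → I → ℝ) (hg : ∀ i j, 0 ≤ g i j)
    (hrow : ∀ i, ∑ j, g i j ≤ μ.real (B i)) (hcol : ∀ j, ∑ i, g i j ≤ ν.real (B j)) :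
    ∃ γ : Measure (S × S), γ.map Prod.fst ≤ μ ∧ γ.map Prod.snd ≤ ν ∧
      γ.real univ = ∑ i, ∑ j, g i j ∧
      ∀ P : S × S → Prop, (∀ i j, g i j ≠ 0 → ∀ x ∈ B i, ∀ y ∈ B j, P (x, y)) → ∀ᵐ p ∂γ, P p := by
  classical
  have hga : ∀ i j, g i j ≤ μ.real (B i) := fun i j =>
    (Finset.single_le_sum (fun k _ => hg i k) (Finset.mem_univ j)).trans (hrow i)
  have hgb : ∀ i j, g i j ≤ ν.real (B j) := fun i j =>
    (Finset.single_le_sum (f := fun k => g k j) (fun k _ => hg k j) (Finset.mem_univ i)).trans (hcol j)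
  let c : I → I → ℝ := fun i j => g i j / (μ.real (B i) * ν.real (B j))
  have hc : ∀ i j, 0 ≤ c i j := fun i j => div_nonneg (hg i j) (by positivity)
  have hcab : ∀ i j, c i j * μ.real (B i) * ν.real (B j) = g i j := by
    intro i j
    by_cases h1 : μ.real (B i) = 0
    · have := hga i j; rw [h1] at this
      simp [h1, le_antisymm this (hg i j)]
    by_cases h2 : ν.real (B j) = 0
    · have := hgb i j; rw [h2] at this
      simp [h2, le_antisymm this (hg i j)]
    simp only [c]; field_simp
  have hrow' : ∀ i, ∑ j, c i j * ν.real (B j) ≤ 1 := by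
    intro i
    by_cases h1 : μ.real (B i) = 0
    · simp [c, h1]
    have h1' : 0 < μ.real (B i) := lt_of_le_of_ne measureReal_nonneg (Ne.symm h1)
    refine le_of_mul_le_mul_right ?_ h1'
    rw [Finset.sum_mul, one_mul]
    refine le_trans (le_of_eq (Finset.sum_congr rfl fun j _ => ?_)) (hrow i)
    rw [← hcab i j]; ring
  have hcol' : ∀ j, ∑ i, c i j * μ.real (B i) ≤ 1 := by
    intro j
    by_cases h1 : ν.real (B j) = 0
    · simp [c, h1]
    have h1' : 0 < ν.real (B j) := lt_of_le_of_ne measureReal_nonneg (Ne.symm h1)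
    refine le_of_mul_le_mul_right ?_ h1'
    rw [Finset.sum_mul, one_mul]
    refine le_trans (le_of_eq (Finset.sum_congr rfl fun i _ => ?_)) (hcol j)
    rw [← hcab i j]
  have key : ∀ (ρ : Measure S) (A : Set S), MeasurableSet A →
      ∑ i, ρ (A ∩ B i) ≤ ρ A := by
    intro ρ A hA
    rw [← measure_biUnion_finset]
    · exact measure_mono (by simp)
    · intro i _ j _ hij
      exact (hdis hij).mono inter_subset_right inter_subset_right
    · exact fun i _ => hA.inter (hB i)
  let γ : Measure (S × S) := ∑ i, ∑ j, ENNReal.ofReal (c i j) •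
    ((μ.restrict (B i)).prod (ν.restrict (B j)))
  have hγ : ∀ E, γ E = ∑ i, ∑ j, ENNReal.ofReal (c i j) *
    ((μ.restrict (B i)).prod (ν.restrict (B j))) E := by
    intro E
    simp [γ, Measure.finsetSum_apply]
  refine ⟨γ, ?_, ?_, ?_, ?_⟩
  · refine Measure.le_iff.2 fun A hA => ?_
    rw [Measure.map_apply measurable_fst hA, hγ]
    refine le_trans (Finset.sum_le_sum fun i _ => ?_) (key μ A hA)
    have : ∀ j, ENNReal.ofReal (c i j) * ((μ.restrict (B i)).prod (ν.restrict (B j)))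
        (Prod.fst ⁻¹' A) = ENNReal.ofReal (c i j * ν.real (B j)) * μ (A ∩ B i) := by
      intro j
      rw [← prod_univ, Measure.prod_prod, Measure.restrict_apply hA, Measure.restrict_apply_univ,
        ENNReal.ofReal_mul (hc i j), ofReal_measureReal]
      ring
    simp_rw [this]
    rw [← Finset.sum_mul, ← ENNReal.ofReal_sum_of_nonneg
      (fun j _ => mul_nonneg (hc i j) measureReal_nonneg)]
    calc _ ≤ 1 * μ (A ∩ B i) := by
          gcongr; exact ENNReal.ofReal_le_one.2 (hrow' i)
      _ = _ := one_mul _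
  · refine Measure.le_iff.2 fun A hA => ?_
    rw [Measure.map_apply measurable_snd hA, hγ, Finset.sum_comm]
    refine le_trans (Finset.sum_le_sum fun j _ => ?_) (key ν A hA)
    have : ∀ i, ENNReal.ofReal (c i j) * ((μ.restrict (B i)).prod (ν.restrict (B j)))
        (Prod.snd ⁻¹' A) = ENNReal.ofReal (c i j * μ.real (B i)) * ν (A ∩ B j) := by
      intro i
      rw [← univ_prod, Measure.prod_prod, Measure.restrict_apply hA, Measure.restrict_apply_univ,
        ENNReal.ofReal_mul (hc i j), ofReal_measureReal]
      ring
    simp_rw [this]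
    rw [← Finset.sum_mul, ← ENNReal.ofReal_sum_of_nonneg
      (fun i _ => mul_nonneg (hc i j) measureReal_nonneg)]
    calc _ ≤ 1 * ν (A ∩ B j) := by
          gcongr; exact ENNReal.ofReal_le_one.2 (hcol' j)
      _ = _ := one_mul _
  · rw [measureReal_def, hγ]
    have : ∀ i j, ENNReal.ofReal (c i j) * ((μ.restrict (B i)).prod (ν.restrict (B j)))
        univ = ENNReal.ofReal (g i j) := by
      intro i j
      rw [← univ_prod_univ, Measure.prod_prod, Measure.restrict_apply_univ,
        Measure.restrict_apply_univ, ← hcab i j,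
        ENNReal.ofReal_mul (mul_nonneg (hc i j) measureReal_nonneg), ENNReal.ofReal_mul (hc i j),
        ofReal_measureReal, ofReal_measureReal]
      ring
    simp_rw [this]
    rw [ENNReal.toReal_sum (by intro i _; exact ENNReal.sum_ne_top.2 fun j _ => ENNReal.ofReal_ne_top)]
    refine Finset.sum_congr rfl fun i _ => ?_
    rw [ENNReal.toReal_sum (by intro i _; exact ENNReal.ofReal_ne_top)]
    exact Finset.sum_congr rfl fun j _ => ENNReal.toReal_ofReal (hg i j)
  · intro P hP
    simp only [γ]
    rw [ae_finsetSum_measure_iff]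
    intro i _
    rw [ae_finsetSum_measure_iff]
    intro j _
    by_cases h0 : g i j = 0
    · simp [c, h0]
    refine Measure.ae_smul_measure ?_ _
    rw [Measure.prod_restrict]
    filter_upwards [ae_restrict_mem ((hB i).prod (hB j))] with p hp
    exact hP i j h0 p.1 hp.1 p.2 hp.2

theorem strassen_aux {S : Type} [MetricSpace S]
    [TopologicalSpace.SeparableSpace S] [MeasurableSpace S] [BorelSpace S]
    (μ ν : Measure S) [IsFiniteMeasure μ] [IsFiniteMeasure ν] (ε : ℝ) (hε : 0 < ε)
    (h : ∀ A : Set S, MeasurableSet A → μ A ≤ ν (thicken dist ε A) + ENNReal.ofReal ε)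
    (δ : ℝ) (hδ : 0 < δ) :
    ∃ γ : Measure (S × S), γ.map Prod.fst ≤ μ ∧ γ.map Prod.snd ≤ ν ∧
      (∀ᵐ p ∂γ, dist p.1 p.2 ≤ ε + 2 * δ) ∧ μ.real univ ≤ γ.real univ + ε + 3 * δ := by
  classical
  obtain ⟨As, hm, hbd, hdiam, hcov, hdis⟩ :=
    SeparableSpace.exists_measurable_partition_diam_le S hδ
  have tail : ∀ ρ : Measure S, IsFiniteMeasure ρ →
      ∀ᶠ n in Filter.atTop, ρ.real (⋃ i, ⋃ (_ : i ≥ n), As i) < δ := by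
    intro ρ _
    have := tendsto_measure_biUnion_Ici_zero_of_pairwise_disjoint (μ := ρ)
      (fun i => (hm i).nullMeasurableSet) hdis
    have h2 := (this.eventually_lt_const (ENNReal.ofReal_pos.2 hδ))
    filter_upwards [h2] with n hn
    exact (ENNReal.lt_ofReal_iff_toReal_lt (measure_ne_top _ _)).1 hn
  obtain ⟨n, hn1, hn2⟩ := ((tail μ inferInstance).and (tail ν inferInstance)).exists
  let B : Fin n → Set S := fun i => As i
  let rem : Set S := ⋃ i, ⋃ (_ : i ≥ n), As i
  have hBm : ∀ i, MeasurableSet (B i) := fun i => hm i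
  have hBd : Pairwise fun i j => Disjoint (B i) (B j) := fun i j hij =>
    hdis (fun e => hij (Fin.ext e))
  have hcases : ∀ y, y ∈ rem ∨ ∃ i, y ∈ B i := by
    intro y
    have : y ∈ ⋃ n, As n := hcov ▸ mem_univ y
    obtain ⟨k, hk⟩ := mem_iUnion.1 this
    by_cases hkn : k < n
    · exact Or.inr ⟨⟨k, hkn⟩, hk⟩
    · exact Or.inl (mem_iUnion₂.2 ⟨k, not_lt.1 hkn, hk⟩)
  let R : Fin n → Fin n → Prop := fun i j => ∃ x ∈ B i, ∃ y ∈ B j, dist x y < ε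
  have hsum : ∀ (ρ : Measure S) (_ : IsFiniteMeasure ρ) (J : Finset (Fin n)),
      ρ.real (⋃ i ∈ J, B i) = ∑ i ∈ J, ρ.real (B i) := by
    intro ρ _ J
    exact measureReal_biUnion_finset (fun i _ j _ hij => hBd hij) (fun i _ => hBm i)
  obtain ⟨g, hg0, hgR, hrow, hcol, htot⟩ := flow_aux R (fun i => μ.real (B i))
    (fun i => ν.real (B i)) (fun _ => measureReal_nonneg) (fun _ => measureReal_nonneg)
    (ε + δ) (by positivity) (by
      intro J J' hJ'
      rw [← hsum μ inferInstance, ← hsum ν inferInstance]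
      have h1 := h (⋃ i ∈ J, B i) (Finset.measurableSet_biUnion _ fun i _ => hBm i)
      have h2 : thicken dist ε (⋃ i ∈ J, B i) ⊆ (⋃ j ∈ J', B j) ∪ rem := by
        rintro y ⟨x, hx, hxy⟩
        obtain ⟨i, hi, hxi⟩ := mem_iUnion₂.1 hx
        rcases hcases y with hy | ⟨j, hy⟩
        · exact Or.inr hy
        · exact Or.inl (mem_iUnion₂.2 ⟨j, (hJ' j).2 ⟨i, hi, x, hxi, y, hy, hxy⟩, hy⟩)
      have h3 : μ.real (⋃ i ∈ J, B i) ≤ ν.real (thicken dist ε (⋃ i ∈ J, B i)) + ε := by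
        have := ENNReal.toReal_mono (by finiteness) h1
        rwa [ENNReal.toReal_add (by finiteness) (by finiteness),
          ENNReal.toReal_ofReal hε.le] at this
      have h4 := (measureReal_mono (μ := ν) h2).trans (measureReal_union_le _ _)
      have h5 : ν.real rem < δ := hn2
      linarith) δ hδ
  obtain ⟨γ, h1, h2, h3, h4⟩ := build_aux μ ν B hBm hBd g hg0 hrow hcol
  refine ⟨γ, h1, h2, h4 _ ?_, ?_⟩
  · intro i j hij x hx y hy
    have hR : R i j := by by_contra hc; exact hij (hgR i j hc)
    obtain ⟨x', hx', y', hy', hd⟩ := hR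
    have e1 := (Metric.dist_le_diam_of_mem (hbd i) hx hx').trans (hdiam i)
    have e2 := (Metric.dist_le_diam_of_mem (hbd j) hy' hy).trans (hdiam j)
    have := dist_triangle4 x x' y' y
    show dist x y ≤ _
    linarith
  · have e : (univ : Set S) ⊆ (⋃ i ∈ (Finset.univ : Finset (Fin n)), B i) ∪ rem := by
      intro y _
      rcases hcases y with hy | ⟨j, hy⟩
      · exact Or.inr hy
      · exact Or.inl (mem_iUnion₂.2 ⟨j, Finset.mem_univ _, hy⟩)
    have e2 := (measureReal_mono (μ := μ) e).trans (measureReal_union_le _ _)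
    rw [hsum μ inferInstance] at e2
    have h5 : μ.real rem < δ := hn1
    rw [h3]
    linarith

theorem rest_aux {S : Type} [MeasurableSpace S] (μ ν : Measure S)
    [IsFiniteMeasure μ] [IsFiniteMeasure ν] (hle : ν univ ≤ μ univ) :
    ∃ γ : Measure (S × S), γ.map Prod.fst ≤ μ ∧ γ.map Prod.snd = ν := by
  by_cases h0 : μ univ = 0
  · have hν : ν = 0 := by
      rw [← Measure.measure_univ_eq_zero]; rw [h0] at hle; exact le_antisymm hle bot_le
    exact ⟨0, by simp [Measure.zero_le], by simp [hν]⟩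
  · refine ⟨(μ univ)⁻¹ • μ.prod ν, ?_, ?_⟩
    · rw [Measure.map_smul, Measure.map_fst_prod, smul_smul]
      refine Measure.le_iff.2 fun A _ => ?_
      rw [Measure.smul_apply, smul_eq_mul]
      calc _ ≤ 1 * μ A := by
            gcongr
            calc (μ univ)⁻¹ * ν univ ≤ (μ univ)⁻¹ * μ univ := by gcongr
              _ = 1 := ENNReal.inv_mul_cancel h0 (measure_ne_top _ _)
        _ = _ := one_mul _
    · rw [Measure.map_smul, Measure.map_snd_prod, smul_smul,
        ENNReal.inv_mul_cancel h0 (measure_ne_top _ _), one_smul]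

theorem uwAux_le_aux {S : Type} [MetricSpace S]
    [TopologicalSpace.SeparableSpace S] [MeasurableSpace S] [BorelSpace S]
    (hd : ∀ x y : S, dist x y ≤ 1)
    (μ ν : Measure S) [IsFiniteMeasure μ] [IsFiniteMeasure ν] (hν : ν univ ≤ 1)
    (hle : ν univ ≤ μ univ) (γ : Measure (S × S)) (h1 : γ.map Prod.fst ≤ μ)
    (h2 : γ.map Prod.snd ≤ ν) (c : ℝ) (hc : ∀ᵐ p ∂γ, dist p.1 p.2 ≤ c) :
    uwAux dist μ ν ≤ μ.real univ - γ.real univ + c * γ.real univ := by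
  have := UniformSpace.secondCountable_of_separable S
  have hm1 : (γ.map Prod.fst) univ = γ univ := by
    rw [Measure.map_apply measurable_fst MeasurableSet.univ]; simp
  have hm2 : (γ.map Prod.snd) univ = γ univ := by
    rw [Measure.map_apply measurable_snd MeasurableSet.univ]; simp
  have : IsFiniteMeasure γ := ⟨by rw [← hm2]; exact (h2 univ).trans_lt (measure_lt_top _ _)⟩
  have s1 := Measure.sub_add_cancel_of_le h1
  have s2 := Measure.sub_add_cancel_of_le h2
  have m1 : (μ - γ.map Prod.fst) univ = μ univ - γ univ := by
    rw [Measure.sub_apply MeasurableSet.univ h1, hm1]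
  have m2 : (ν - γ.map Prod.snd) univ = ν univ - γ univ := by
    rw [Measure.sub_apply MeasurableSet.univ h2, hm2]
  obtain ⟨γ', h1', h2'⟩ := rest_aux (μ - γ.map Prod.fst) (ν - γ.map Prod.snd) (by
    rw [m1, m2]; gcongr)
  have hm2' : γ' univ = ν univ - γ univ := by
    rw [← m2, ← h2', Measure.map_apply measurable_snd MeasurableSet.univ]; simp
  have : IsFiniteMeasure γ' := ⟨by rw [hm2']; exact tsub_le_self.trans_lt (measure_lt_top _ _)⟩
  have hγν : γ univ ≤ ν univ := hm2 ▸ h2 univ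
  have hm2r : γ'.real univ = ν.real univ - γ.real univ := by
    rw [measureReal_def, hm2', ENNReal.toReal_sub_of_le hγν (measure_ne_top _ _)]; rfl
  have hfst : (γ + γ').map Prod.fst ≤ μ := by
    rw [Measure.map_add _ _ measurable_fst, add_comm]
    calc _ ≤ (μ - γ.map Prod.fst) + γ.map Prod.fst := by gcongr
      _ = μ := s1
  have hsnd : (γ + γ').map Prod.snd = ν := by
    rw [Measure.map_add _ _ measurable_snd, h2', add_comm, s2]
  have hmass : (γ + γ') univ ≤ 1 := by
    rw [Measure.add_apply, hm2', add_tsub_cancel_of_le hγν]; exact hν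
  have hint : ∀ ρ : Measure (S × S), IsFiniteMeasure ρ →
      Integrable (fun p : S × S => dist p.1 p.2) ρ := by
    intro ρ _
    refine Integrable.of_bound (C := 1) (by fun_prop) (ae_of_all _ fun p => ?_)
    rw [Real.norm_of_nonneg dist_nonneg]; exact hd _ _
  have hI : ∫ p, dist p.1 p.2 ∂(γ + γ') ≤ c * γ.real univ + γ'.real univ := by
    rw [integral_add_measure (hint _ inferInstance) (hint _ inferInstance)]
    refine add_le_add ?_ ?_
    · calc _ ≤ ∫ p : S × S, c ∂γ := integral_mono_ae (hint _ inferInstance) (integrable_const _) hc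
        _ = _ := by simp [mul_comm]
    · calc _ ≤ ∫ p : S × S, (1 : ℝ) ∂γ' := integral_mono (hint _ inferInstance)
              (integrable_const _) fun p => hd _ _
        _ = _ := by simp
  have hs : sInf {r : ℝ | ∃ γ : Measure (S × S), γ Set.univ ≤ 1 ∧
      γ.map Prod.fst ≤ μ ∧ γ.map Prod.snd = ν ∧ r = ∫ p, dist p.1 p.2 ∂γ} ≤
      ∫ p, dist p.1 p.2 ∂(γ + γ') := by
    refine csInf_le ⟨0, ?_⟩ ⟨γ + γ', hmass, hfst, hsnd, rfl⟩
    rintro r ⟨ρ, -, -, -, rfl⟩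
    exact integral_nonneg fun p => dist_nonneg
  unfold uwAux
  have e1 : (μ univ).toReal = μ.real univ := rfl
  have e2 : (ν univ).toReal = ν.real univ := rfl
  linarith

theorem uw_le_prok_aux {S : Type} [MetricSpace S]
    [TopologicalSpace.SeparableSpace S] [MeasurableSpace S] [BorelSpace S]
    (hd : ∀ x y : S, dist x y ≤ 1)
    (μ ν : Measure S) [IsFiniteMeasure μ] [IsFiniteMeasure ν] (hμ : μ univ ≤ 1) (hν : ν univ ≤ 1)
    (hle : ν univ ≤ μ univ) (ε : ℝ) (hε : 0 < ε)
    (h : ∀ A : Set S, MeasurableSet A → μ A ≤ ν (thicken dist ε A) + ENNReal.ofReal ε) :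
    uwAux dist μ ν ≤ 2 * ε := by
  refine le_of_forall_pos_le_add fun η hη => ?_
  obtain ⟨γ, h1, h2, h3, h4⟩ := strassen_aux μ ν ε hε h (η / 5) (by positivity)
  have := uwAux_le_aux hd μ ν hν hle γ h1 h2 _ h3
  have hm2 : (γ.map Prod.snd) univ = γ univ := by
    rw [Measure.map_apply measurable_snd MeasurableSet.univ]; simp
  have hγ : γ.real univ ≤ 1 := by
    have : γ univ ≤ 1 := hm2 ▸ (h2 univ).trans hν
    exact ENNReal.toReal_le_of_le_ofReal (by norm_num) (by simpa using this)
  have : (ε + 2 * (η / 5)) * γ.real univ ≤ (ε + 2 * (η / 5)) * 1 := by gcongr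
  linarith

theorem lip_integrable_aux {S : Type} [MetricSpace S]
    [TopologicalSpace.SeparableSpace S] [MeasurableSpace S] [BorelSpace S]
    (μ : Measure S) [IsFiniteMeasure μ] (f : S → ℝ) (a : NNReal) (b : ℝ)
    (hf : LipschitzWith a f) (hb : ∀ x, |f x| ≤ b) : Integrable f μ := by
  have := UniformSpace.secondCountable_of_separable S
  exact Integrable.of_bound (C := b) hf.continuous.aestronglyMeasurable (ae_of_all _ hb)

theorem kr_le_aux {S : Type} [MetricSpace S]
    [TopologicalSpace.SeparableSpace S] [MeasurableSpace S] [BorelSpace S]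
    (hd : ∀ x y : S, dist x y ≤ 1)
    (μ ν : Measure S) [IsFiniteMeasure μ] [IsFiniteMeasure ν] (hν : ν univ ≤ 1)
    (hle : ν univ ≤ μ univ) (f : S → ℝ) (hf : LipschitzWith 1 f) (hb : ∀ x, |f x| ≤ 1) :
    |∫ x, f x ∂μ - ∫ x, f x ∂ν| ≤ uwAux dist μ ν := by
  have := UniformSpace.secondCountable_of_separable S
  unfold uwAux
  rw [← sub_le_iff_le_add']
  refine le_csInf ?_ ?_
  · obtain ⟨γ, h1, h2⟩ := rest_aux μ ν hle
    have hm2 : (γ.map Prod.snd) univ = γ univ := by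
      rw [Measure.map_apply measurable_snd MeasurableSet.univ]; simp
    exact ⟨_, γ, by rw [← hm2, h2]; exact hν, h1, h2, rfl⟩
  rintro r ⟨γ, hγ, h1, h2, rfl⟩
  have : IsFiniteMeasure γ := ⟨hγ.trans_lt ENNReal.one_lt_top⟩
  have hm1 : (γ.map Prod.fst) univ = γ univ := by
    rw [Measure.map_apply measurable_fst MeasurableSet.univ]; simp
  have hm2 : (γ.map Prod.snd) univ = γ univ := by
    rw [Measure.map_apply measurable_snd MeasurableSet.univ]; simp
  have s1 := Measure.sub_add_cancel_of_le h1
  have m1 : (μ - γ.map Prod.fst) univ = μ univ - ν univ := by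
    rw [Measure.sub_apply MeasurableSet.univ h1, hm1, ← hm2, h2]
  have : IsFiniteMeasure (μ - γ.map Prod.fst) :=
    ⟨by rw [m1]; exact tsub_le_self.trans_lt (measure_lt_top _ _)⟩
  have m1r : (μ - γ.map Prod.fst).real univ = μ.real univ - ν.real univ := by
    rw [measureReal_def, m1, ENNReal.toReal_sub_of_le hle (measure_ne_top _ _)]; rfl
  have i1 : ∫ x, f x ∂μ = ∫ x, f x ∂(μ - γ.map Prod.fst) + ∫ p, f p.1 ∂γ := by
    conv_lhs => rw [← s1]
    rw [integral_add_measure (lip_integrable_aux _ f 1 1 hf hb) (lip_integrable_aux _ f 1 1 hf hb),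
      integral_map measurable_fst.aemeasurable hf.continuous.aestronglyMeasurable]
  have i2 : ∫ x, f x ∂ν = ∫ p, f p.2 ∂γ := by
    rw [← h2, integral_map measurable_snd.aemeasurable hf.continuous.aestronglyMeasurable]
  have hc := hf.continuous
  have i3 : ‖∫ x, f x ∂(μ - γ.map Prod.fst)‖ ≤ 1 * (μ - γ.map Prod.fst).real univ :=
    norm_integral_le_of_norm_le_const (ae_of_all _ hb)
  have i4 : |∫ p, f p.1 ∂γ - ∫ p, f p.2 ∂γ| ≤ ∫ p, dist p.1 p.2 ∂γ := by
    rw [← integral_sub (f := fun p : S × S => f p.1) (g := fun p : S × S => f p.2)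
      (Integrable.of_bound (C := 1) (hc.comp continuous_fst).aestronglyMeasurable
        (ae_of_all _ fun p => hb p.1))
      (Integrable.of_bound (C := 1) (hc.comp continuous_snd).aestronglyMeasurable
        (ae_of_all _ fun p => hb p.2)), ← Real.norm_eq_abs]
    refine norm_integral_le_of_norm_le ?_ (ae_of_all _ fun p => ?_)
    · refine Integrable.of_bound (C := 1) (by fun_prop) (ae_of_all _ fun p => ?_)
      rw [Real.norm_of_nonneg dist_nonneg]; exact hd _ _
    · have := hf.dist_le_mul p.1 p.2
      rw [Real.dist_eq] at this
      simpa using this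
  rw [m1r, Real.norm_eq_abs, one_mul] at i3
  rw [i1, i2]
  have e1 : (μ univ).toReal = μ.real univ := rfl
  have e2 : (ν univ).toReal = ν.real univ := rfl
  have := abs_add_le (∫ x, f x ∂(μ - γ.map Prod.fst)) (∫ p, f p.1 ∂γ - ∫ p, f p.2 ∂γ)
  rw [← add_sub_assoc] at this
  linarith

theorem diff_le_two_aux {S : Type} [MetricSpace S] [MeasurableSpace S]
    (μ ν : Measure S) (hμ : μ univ ≤ 1) (hν : ν univ ≤ 1) (f : S → ℝ) (hb : ∀ x, |f x| ≤ 1) :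
    |∫ x, f x ∂μ - ∫ x, f x ∂ν| ≤ 2 := by
  have key : ∀ ρ : Measure S, ρ univ ≤ 1 → |∫ x, f x ∂ρ| ≤ 1 := by
    intro ρ hρ
    have : IsFiniteMeasure ρ := ⟨hρ.trans_lt ENNReal.one_lt_top⟩
    have : ‖∫ x, f x ∂ρ‖ ≤ 1 * ρ.real univ :=
      norm_integral_le_of_norm_le_const (ae_of_all _ hb)
    have h2 : ρ.real univ ≤ 1 :=
      ENNReal.toReal_le_of_le_ofReal (by norm_num) (by simpa using hρ)
    rw [Real.norm_eq_abs] at this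
    linarith
  have := abs_sub (∫ x, f x ∂μ) (∫ x, f x ∂ν)
  linarith [key μ hμ, key ν hν]

theorem bl_bdd_aux {S : Type} [MetricSpace S] [MeasurableSpace S]
    (μ ν : Measure S) (hμ : μ univ ≤ 1) (hν : ν univ ≤ 1) :
    2 ∈ upperBounds {r : ℝ | ∃ (f : S → ℝ) (a b : NNReal), LipschitzWith a f ∧ (∀ x, |f x| ≤ b) ∧
      (a : ℝ) + (b : ℝ) ≤ 1 ∧ r = |∫ x, f x ∂μ - ∫ x, f x ∂ν|} := by
  rintro r ⟨f, a, b, -, hb, hab, rfl⟩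
  exact diff_le_two_aux μ ν hμ hν f fun x => (hb x).trans (by linarith [a.coe_nonneg])

theorem prok_adm_aux {S : Type} [MetricSpace S]
    [TopologicalSpace.SeparableSpace S] [MeasurableSpace S] [BorelSpace S]
    (μ ν : Measure S) (hμ : μ univ ≤ 1) (hν : ν univ ≤ 1) (ε : ℝ) (hε : 0 < ε)
    (β : ℝ) (hβ0 : 0 ≤ β) (hβ2 : β ≤ 2) (hβε : 2 * √β ≤ ε)
    (hβ : ∀ (f : S → ℝ) (a b : NNReal), LipschitzWith a f → (∀ x, |f x| ≤ b) →
      (a : ℝ) + (b : ℝ) ≤ 1 → |∫ x, f x ∂μ - ∫ x, f x ∂ν| ≤ β) (A : Set S) (hA : MeasurableSet A) :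
    μ A ≤ ν (thicken dist ε A) + ENNReal.ofReal ε := by
  have : IsFiniteMeasure μ := ⟨hμ.trans_lt ENNReal.one_lt_top⟩
  have : IsFiniteMeasure ν := ⟨hν.trans_lt ENNReal.one_lt_top⟩
  have hth : thicken dist ε A = Metric.thickening ε A := by
    ext y
    simp only [thicken, Metric.mem_thickening_iff, dist_comm y]
    rfl
  rw [hth]
  let f : S → ℝ := fun x => thickenedIndicator hε A x
  have hfL : LipschitzWith ε.toNNReal⁻¹ f := lipschitzWith_thickenedIndicator hε A
  have hf0 : ∀ x, 0 ≤ f x := fun x => NNReal.coe_nonneg _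
  have hf1 : ∀ x, f x ≤ 1 := fun x => by
    exact_mod_cast thickenedIndicator_le_one hε A x
  have hfabs : ∀ x, |f x| ≤ 1 := fun x => by rw [abs_of_nonneg (hf0 x)]; exact hf1 x
  have hI : ∀ ρ : Measure S, IsFiniteMeasure ρ → Integrable f ρ := fun ρ _ =>
    lip_integrable_aux ρ f _ 1 hfL hfabs
  have hmu : μ.real A ≤ ∫ x, f x ∂μ := by
    rw [← integral_indicator_one hA]
    refine integral_mono ((integrable_const (1 : ℝ)).indicator hA) (hI _ inferInstance) fun x => ?_
    by_cases hx : x ∈ A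
    · have h1 : f x = 1 := by simp only [f]; rw [thickenedIndicator_one hε A hx]; rfl
      simp [h1, hx]
    · simp only [indicator_of_notMem hx]; exact hf0 x
  have hnu : ∫ x, f x ∂ν ≤ ν.real (Metric.thickening ε A) := by
    rw [← integral_indicator_one Metric.isOpen_thickening.measurableSet]
    refine integral_mono (hI _ inferInstance)
      ((integrable_const (1 : ℝ)).indicator Metric.isOpen_thickening.measurableSet) fun x => ?_
    by_cases hx : x ∈ Metric.thickening ε A
    · simp only [indicator_of_mem hx]; exact hf1 x
    · have h1 : f x = 0 := by simp only [f]; rw [thickenedIndicator_zero hε A hx]; rfl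
      simp [h1, hx]
  -- scale
  let k : NNReal := (1 + ε.toNNReal⁻¹)⁻¹
  have hk : (k : ℝ) = (1 + ε⁻¹)⁻¹ := by simp [k, Real.coe_toNNReal _ hε.le]
  have hkpos : (0 : ℝ) < 1 + ε⁻¹ := by positivity
  have hscale := hβ (fun x => (k : ℝ) * f x) (k * ε.toNNReal⁻¹) k (by
      refine LipschitzWith.of_dist_le_mul fun x y => ?_
      have := hfL.dist_le_mul x y
      rw [Real.dist_eq] at this ⊢
      rw [← mul_sub, abs_mul, abs_of_nonneg k.coe_nonneg]
      push_cast at this ⊢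
      rw [mul_assoc]
      gcongr) (by
      intro x
      rw [abs_mul, abs_of_nonneg k.coe_nonneg]
      exact mul_le_of_le_one_right k.coe_nonneg (hfabs x)) (by
      push_cast
      rw [hk, Real.coe_toNNReal _ hε.le]
      apply le_of_eq; field_simp; ring)
  rw [integral_const_mul, integral_const_mul, ← mul_sub, abs_mul, abs_of_nonneg k.coe_nonneg, hk,
    inv_mul_le_iff₀ hkpos] at hscale
  have hs : (1 + ε⁻¹) * β ≤ ε := by
    have hq : √β * √β = β := Real.mul_self_sqrt hβ0
    have hq0 := Real.sqrt_nonneg β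
    have hq2 : √β ≤ 3 / 2 := by
      rw [Real.sqrt_le_left (by norm_num)]; linarith
    have b1 : β ≤ 3 / 4 * ε := by nlinarith
    have b2 : β ≤ ε / 4 * ε := by nlinarith
    have b3 : ε⁻¹ * β ≤ ε / 4 := by
      rw [inv_mul_le_iff₀ hε]; linarith
    linarith
  have hfin : μ.real A ≤ ν.real (Metric.thickening ε A) + ε := by
    have := le_abs_self (∫ x, f x ∂μ - ∫ x, f x ∂ν)
    linarith
  rw [← ofReal_measureReal (μ := μ), ← ofReal_measureReal (μ := ν),
    ← ENNReal.ofReal_add measureReal_nonneg hε.le]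
  exact ENNReal.ofReal_le_ofReal hfin

/-- On a complete separable metric space of diameter at most one, for all Borel
measures `μ, ν` of total mass at most one:
`BL(μ,ν) ≤ K(μ,ν) ≤ W(μ,ν) ≤ 2·P(μ,ν) ≤ 4·√(BL(μ,ν))`. -/
theorem bl_kr_w_prokhorov_inequalities {S : Type} [MetricSpace S] [CompleteSpace S]
    [TopologicalSpace.SeparableSpace S] [MeasurableSpace S] [BorelSpace S]
    (hd : ∀ x y : S, dist x y ≤ 1)
    (μ ν : Measure S) (hμ : μ Set.univ ≤ 1) (hν : ν Set.univ ≤ 1) :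
    blDist μ ν ≤ krDist μ ν ∧
    krDist μ ν ≤ uwDist dist μ ν ∧
    uwDist dist μ ν ≤ 2 * prokhorovDist dist μ ν ∧
    2 * prokhorovDist dist μ ν ≤ 4 * Real.sqrt (blDist μ ν) := by
  haveI : IsFiniteMeasure μ := ⟨hμ.trans_lt ENNReal.one_lt_top⟩
  haveI : IsFiniteMeasure ν := ⟨hν.trans_lt ENNReal.one_lt_top⟩
  refine ⟨?_, ?_, ?_, ?_⟩
  · unfold blDist krDist
    refine csSup_le_csSup ⟨2, ?_⟩ ⟨_, fun _ => 0, 0, 0, LipschitzWith.const 0, by simp, by simp, rfl⟩ ?_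
    · rintro r ⟨f, -, hb, rfl⟩
      exact diff_le_two_aux μ ν hμ hν f hb
    · rintro r ⟨f, a, b, hf, hb, hab, rfl⟩
      have ha : a ≤ 1 := by
        rw [← NNReal.coe_le_coe]; push_cast; linarith [b.coe_nonneg]
      exact ⟨f, hf.weaken ha, fun x => (hb x).trans (by linarith [a.coe_nonneg]), rfl⟩
  · unfold krDist uwDist
    refine csSup_le ⟨_, fun _ => 0, LipschitzWith.const' 0, by simp, rfl⟩ ?_
    rintro r ⟨f, hf, hb, rfl⟩
    split_ifs with hle
    · exact kr_le_aux hd μ ν hν hle f hf hb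
    · rw [abs_sub_comm]
      exact kr_le_aux hd ν μ hμ (not_le.1 hle).le f hf hb
  · rw [← div_le_iff₀' two_pos]
    unfold prokhorovDist
    refine le_csInf ⟨2, two_pos, fun A _ => ⟨?_, ?_⟩⟩ ?_
    · exact ((measure_mono (subset_univ A)).trans hμ).trans (le_add_left (by simp))
    · exact ((measure_mono (subset_univ A)).trans hν).trans (le_add_left (by simp))
    rintro ε ⟨hε, h⟩
    rw [div_le_iff₀' two_pos]
    unfold uwDist
    split_ifs with hle
    · exact uw_le_prok_aux hd μ ν hμ hν hle ε hε fun A hA => (h A hA).1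
    · exact uw_le_prok_aux hd ν μ hν hμ (not_le.1 hle).le ε hε fun A hA => (h A hA).2
  · have hbdd := bl_bdd_aux μ ν hμ hν
    have hle : ∀ (f : S → ℝ) (a b : NNReal), LipschitzWith a f → (∀ x, |f x| ≤ b) →
        (a : ℝ) + (b : ℝ) ≤ 1 → |∫ x, f x ∂μ - ∫ x, f x ∂ν| ≤ blDist μ ν :=
      fun f a b h1 h2 h3 => le_csSup ⟨2, hbdd⟩ ⟨f, a, b, h1, h2, h3, rfl⟩
    have h0 : 0 ≤ blDist μ ν :=
      (abs_nonneg _).trans (hle (fun _ => 0) 0 0 (LipschitzWith.const 0) (by simp) (by simp))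
    have h2 : blDist μ ν ≤ 2 :=
      csSup_le ⟨_, fun _ => 0, 0, 0, LipschitzWith.const 0, by simp, by simp, rfl⟩ hbdd
    have : prokhorovDist dist μ ν ≤ 2 * √(blDist μ ν) := by
      refine le_of_forall_pos_le_add fun η hη => ?_
      have hp : 0 < 2 * √(blDist μ ν) + η := by positivity
      refine csInf_le ⟨0, fun r hr => hr.1.le⟩ ⟨hp, fun A hA => ⟨?_, ?_⟩⟩
      · exact prok_adm_aux μ ν hμ hν _ hp _ h0 h2 (by linarith) hle A hA
      · refine prok_adm_aux ν μ hν hμ _ hp _ h0 h2 (by linarith) ?_ A hA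
        intro f a b h1 h2 h3
        rw [abs_sub_comm]; exact hle f a b h1 h2 h3
    linarith

end
end

section
/- Let (S,d) be a finite metric space with S = {x₁,…,x_n}, let μ and ν be (nonnegative, finite Borel) measures on S with ‖μ‖ ≥ ‖ν‖, and let ε > 0. Define ρ(ε) := max_{A ⊆ S} (μ(A) − ν(A^{ε]})), where A^{ε]} := {y ∈ S : d(x,y) ≤ ε for some x ∈ A}. Then ρ(ε) = ‖μ‖ − max Σ_{i,j=1}^{n} 1[d(x_i,x_j) ≤ ε]·x_{ij}, where the maximum is taken over all real variables x_{ij} ≥ 0 satisfying Σ_{i=1}^{n} x_{ij} = ν({x_j}) for every j ∈ [n] and Σ_{j=1}^{n} x_{ij} ≤ μ({x_i}) for every i ∈ [n]. -/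
open MeasureTheory Set

noncomputable section

/-- The closed `ε`-thickening `A^{ε]}` of a set in a metric space. -/
def closedThicken {S : Type} [MetricSpace S] (ε : ℝ) (A : Set S) : Set S :=
  {y | ∃ x ∈ A, dist x y ≤ ε}

open Classical in
lemma lp_exists_min {S : Type} [Fintype S] (a b : S → ℝ) (ha : ∀ i, 0 ≤ a i) (hb : ∀ i, 0 ≤ b i)
    (E : S → S → Prop) :
    ∃ y : S → S → ℝ, ((∀ i j, 0 ≤ y i j) ∧ (∀ i j, ¬ E i j → y i j = 0) ∧
      (∀ i, ∑ j, y i j ≤ a i) ∧ (∀ j, ∑ i, y i j ≤ b j)) ∧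
      ∀ z : S → S → ℝ, ((∀ i j, 0 ≤ z i j) ∧ (∀ i j, ¬ E i j → z i j = 0) ∧
      (∀ i, ∑ j, z i j ≤ a i) ∧ (∀ j, ∑ i, z i j ≤ b j)) →
      ∑ i, (a i - ∑ j, y i j)^2 ≤ ∑ i, (a i - ∑ j, z i j)^2 := by
  let K : Set (S → S → ℝ) := {z | (∀ i j, 0 ≤ z i j) ∧ (∀ i j, ¬ E i j → z i j = 0) ∧
      (∀ i, ∑ j, z i j ≤ a i) ∧ (∀ j, ∑ i, z i j ≤ b j)}
  have hclosed : IsClosed K := by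
    have h1 : IsClosed {z : S → S → ℝ | ∀ i j, 0 ≤ z i j} := by
      simp only [Set.ofPred_forall]
      exact isClosed_iInter fun i => isClosed_iInter fun j =>
        isClosed_le continuous_const (by fun_prop)
    have h2 : IsClosed {z : S → S → ℝ | ∀ i j, ¬ E i j → z i j = 0} := by
      simp only [Set.ofPred_forall]
      exact isClosed_iInter fun i => isClosed_iInter fun j => isClosed_iInter fun _ =>
        isClosed_eq (by fun_prop) continuous_const
    have h3 : IsClosed {z : S → S → ℝ | ∀ i, ∑ j, z i j ≤ a i} := by
      simp only [Set.ofPred_forall]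
      exact isClosed_iInter fun i => 
        isClosed_le (by fun_prop) continuous_const
    have h4 : IsClosed {z : S → S → ℝ | ∀ j, ∑ i, z i j ≤ b j} := by
      simp only [Set.ofPred_forall]
      exact isClosed_iInter fun i => 
        isClosed_le (by fun_prop) continuous_const
    exact h1.inter (h2.inter (h3.inter h4))
  have hcomp : IsCompact K := by
    have hbox : IsCompact (Set.Icc (0 : S → S → ℝ) (fun i _ => a i)) := by
      rw [← Set.pi_univ_Icc]
      refine isCompact_univ_pi fun i => ?_
      rw [← Set.pi_univ_Icc]
      exact isCompact_univ_pi fun j => isCompact_Icc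
    refine hbox.of_isClosed_subset hclosed ?_
    rintro z ⟨h1, h2, h3, h4⟩
    refine ⟨fun i j => h1 i j, fun i j => ?_⟩
    exact (Finset.single_le_sum (f := fun j => z i j) (fun j _ => h1 i j)
      (Finset.mem_univ j)).trans (h3 i)
  have hne : K.Nonempty := ⟨fun _ _ => 0, by simp, by simp, by simpa using ha, by simpa using hb⟩
  obtain ⟨y, hy, hmin⟩ := hcomp.exists_isMinOn hne
    (f := fun z : S → S → ℝ => ∑ i, (a i - ∑ j, z i j)^2) (by fun_prop)
  exact ⟨y, hy, fun z hz => hmin hz⟩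

open Classical in
lemma lp_flow {S : Type} [Fintype S] (a b : S → ℝ) (ha : ∀ i, 0 ≤ a i) (hb : ∀ i, 0 ≤ b i)
    (E : S → S → Prop) :
    ∃ y : S → S → ℝ, (∀ i j, 0 ≤ y i j) ∧ (∀ i j, ¬ E i j → y i j = 0) ∧
      (∀ i, ∑ j, y i j ≤ a i) ∧ (∀ j, ∑ i, y i j ≤ b j) ∧
      ∃ A : Set S, (∀ i, i ∉ A → ∑ j, y i j = a i) ∧
        (∀ j, (∃ i ∈ A, E i j) → ∑ i, y i j = b j ∧ ∀ i, i ∉ A → y i j = 0) := by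
  obtain ⟨y, ⟨h1, h2, h3, h4⟩, hmin⟩ := lp_exists_min a b ha hb E
  refine ⟨y, h1, h2, h3, h4, {i | ∑ j, y i j < a i}, ?_, ?_⟩
  · intro i hi
    exact le_antisymm (h3 i) (not_lt.mp hi)
  rintro j ⟨i, hi, hE⟩
  have hi : ∑ j, y i j < a i := hi
  constructor
  · by_contra hne
    have hlt : ∑ i, y i j < b j := lt_of_le_of_ne (h4 j) hne
    obtain ⟨δ, hδ, hδ2⟩ := exists_between
      (lt_min (sub_pos.2 hi) (sub_pos.2 hlt))
    have hδa := lt_of_lt_of_le hδ2 (min_le_left _ _)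
    have hδb := lt_of_lt_of_le hδ2 (min_le_right _ _)
    have hrow : ∀ p, ∑ q, (y p q + if p = i then (if q = j then δ else 0) else 0)
        = ∑ q, y p q + if p = i then δ else 0 := by
      intro p
      rw [Finset.sum_add_distrib]
      by_cases hp : p = i <;> simp [hp]
    have := hmin (fun p q => y p q + if p = i then (if q = j then δ else 0) else 0) ⟨?_, ?_, ?_, ?_⟩
    · simp only [hrow] at this
      refine absurd this (not_le.2 (Finset.sum_lt_sum ?_ ⟨i, Finset.mem_univ _, ?_⟩))
      · intro p _
        split_ifs with hp
        · subst hp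
          nlinarith
        · simp
      · simp only [if_true]
        nlinarith
    · intro p q
      have := h1 p q
      split_ifs <;> linarith
    · intro p q hpq
      rw [h2 p q hpq]
      split_ifs with e1 e2
      · subst e1 e2; exact absurd hE hpq
      · simp
      · simp
    · intro p
      simp only [hrow]
      have := h3 p
      split_ifs with e
      · subst e; linarith
      · linarith
    · intro q
      simp only [Finset.sum_add_distrib, Finset.sum_ite_eq', Finset.mem_univ, if_true]
      have := h4 q
      split_ifs with e
      · subst e; linarith
      · linarith
  · intro k hk
    by_contra hne
    have hpos : 0 < y k j := lt_of_le_of_ne (h1 k j) (Ne.symm hne)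
    have hksat : ∑ q, y k q = a k := le_antisymm (h3 k) (not_lt.mp hk)
    have hki : k ≠ i := by rintro rfl; exact hk hi
    obtain ⟨δ, hδ, hδ2⟩ := exists_between
      (lt_min (sub_pos.2 hi) hpos)
    have hδa := lt_of_lt_of_le hδ2 (min_le_left _ _)
    have hδb := lt_of_lt_of_le hδ2 (min_le_right _ _)
    have hrow : ∀ p, ∑ q, (y p q + if q = j then ((if p = i then δ else 0) - (if p = k then δ else 0)) else 0)
        = ∑ q, y p q + ((if p = i then δ else 0) - (if p = k then δ else 0)) := by
      intro p
      rw [Finset.sum_add_distrib]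
      simp
    have := hmin (fun p q => y p q + if q = j then ((if p = i then δ else 0) - (if p = k then δ else 0)) else 0) ⟨?_, ?_, ?_, ?_⟩
    · simp only [hrow] at this
      have e : ∀ p, (a p - (∑ q, y p q + ((if p = i then δ else 0) - (if p = k then δ else 0))))^2
          = (a p - ∑ q, y p q)^2 + ((if p = i then δ^2 - 2 * δ * (a p - ∑ q, y p q) else 0)
            + (if p = k then δ^2 + 2 * δ * (a p - ∑ q, y p q) else 0)) := by
        intro p
        by_cases e1 : p = i
        · have e2 : p ≠ k := by rintro rfl; exact hki e1
          simp only [e1, hki.symm, if_true, if_false]; ring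
        · by_cases e2 : p = k
          · simp only [e2, hki, if_true, if_false]; ring
          · simp only [e1, e2, if_false]; ring
      simp only [e, Finset.sum_add_distrib, Finset.sum_ite_eq', Finset.mem_univ, if_true] at this
      nlinarith
    · intro p q
      have := h1 p q
      by_cases e1 : q = j
      · by_cases e2 : p = k
        · subst e1 e2; simp [hki]; linarith
        · simp only [e1, e2, if_true, if_false] at *
          split_ifs <;> linarith
      · simpa [e1] using this
    · intro p q hpq
      rw [h2 p q hpq]
      by_cases e1 : q = j
      · subst e1
        have e2 : p ≠ i := by rintro rfl; exact hpq hE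
        have e3 : p ≠ k := by rintro rfl; exact hne (h2 _ _ hpq)
        simp [e2, e3]
      · simp [e1]
    · intro p
      simp only [hrow]
      have := h3 p
      by_cases e1 : p = i
      · subst e1; simp [hki.symm]; linarith
      · simp only [e1, if_false]
        split_ifs <;> linarith
    · intro q
      have := h4 q
      by_cases e : q = j
      · simp only [Finset.sum_add_distrib, e, if_true, Finset.sum_sub_distrib, Finset.sum_ite_eq', Finset.mem_univ]
        subst e
        linarith
      · simpa [e] using this

lemma lp_complete {S : Type} [Fintype S] (a b : S → ℝ) (hab : ∑ i, b i ≤ ∑ i, a i)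
    (y : S → S → ℝ) (h1 : ∀ i j, 0 ≤ y i j) (h3 : ∀ i, ∑ j, y i j ≤ a i)
    (h4 : ∀ j, ∑ i, y i j ≤ b j) :
    ∃ x : S → S → ℝ, (∀ i j, y i j ≤ x i j) ∧ (∀ j, ∑ i, x i j = b j) ∧
      (∀ i, ∑ j, x i j ≤ a i) := by
  set u : S → ℝ := fun i => a i - ∑ j, y i j with hu
  set v : S → ℝ := fun j => b j - ∑ i, y i j with hv
  have hu0 : ∀ i, 0 ≤ u i := fun i => sub_nonneg.2 (h3 i)
  have hv0 : ∀ i, 0 ≤ v i := fun i => sub_nonneg.2 (h4 i)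
  have huv : ∑ j, v j ≤ ∑ i, u i := by
    simp only [hu, hv, Finset.sum_sub_distrib]
    rw [Finset.sum_comm (f := fun i j => y i j)]
    linarith
  have hU : 0 ≤ ∑ i, u i := Finset.sum_nonneg fun i _ => hu0 i
  refine ⟨fun i j => y i j + u i * v j / ∑ i, u i, ?_, ?_, ?_⟩
  · intro i j
    have := div_nonneg (mul_nonneg (hu0 i) (hv0 j)) hU
    linarith
  · intro j
    rw [Finset.sum_add_distrib, ← Finset.sum_div, ← Finset.sum_mul]
    have : (∑ i, u i) * v j / ∑ i, u i = v j := by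
      rcases eq_or_lt_of_le hU with h | h
      · have : v j ≤ ∑ j, v j := Finset.single_le_sum (fun j _ => hv0 j) (Finset.mem_univ j)
        have : v j = 0 := by linarith [hv0 j]
        simp [this]
      · field_simp
    rw [this]; simp [hv]
  · intro i
    rw [Finset.sum_add_distrib, ← Finset.sum_div, ← Finset.mul_sum]
    have : u i * (∑ j, v j) / ∑ i, u i ≤ u i := by
      rw [mul_div_assoc]
      exact mul_le_of_le_one_right (hu0 i) (div_le_one_of_le₀ huv hU)
    simp only [hu] at this ⊢
    linarith

open Classical in
lemma lp_meas {S : Type} [Fintype S] [MeasurableSpace S] [MeasurableSingletonClass S]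
    (μ : Measure S) [IsFiniteMeasure μ] (A : Set S) :
    (μ A).toReal = ∑ i, if i ∈ A then (μ {i}).toReal else 0 := by
  have h := sum_measureReal_singleton (μ := μ) (A.toFinset)
  rw [Set.coe_toFinset] at h
  rw [← Finset.sum_filter]
  simp only [Measure.real] at h
  rw [← h]
  congr 1
  ext; simp

/-- Linear-programming expression of `ρ(ε)` on a finite metric space:
`max_{A ⊆ S} (μ(A) - ν(A^{ε]}))`, for measures with `‖μ‖ ≥ ‖ν‖`, equals
`‖μ‖ - max Σ_{i,j} 1[d(x_i,x_j) ≤ ε]·x_{ij}`, the maximum over all nonnegative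
`x_{ij}` with `Σ_i x_{ij} = ν({x_j})` and `Σ_j x_{ij} ≤ μ({x_i})`. -/
theorem rho_eq_lp {S : Type} [Fintype S] [MetricSpace S]
    [MeasurableSpace S] [MeasurableSingletonClass S]
    (μ ν : Measure S) [IsFiniteMeasure μ] [IsFiniteMeasure ν]
    (hmass : ν Set.univ ≤ μ Set.univ) (ε : ℝ) (hε : 0 < ε) :
    sSup {r : ℝ | ∃ A : Set S,
        r = (μ A).toReal - (ν (closedThicken ε A)).toReal} =
      (μ Set.univ).toReal -
        sSup {r : ℝ | ∃ x : S → S → ℝ,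
          (∀ i j, 0 ≤ x i j) ∧
          (∀ j, ∑ i, x i j = (ν {j}).toReal) ∧
          (∀ i, ∑ j, x i j ≤ (μ {i}).toReal) ∧
          r = ∑ i, ∑ j, if dist i j ≤ ε then x i j else 0} := by
  classical
  set a : S → ℝ := fun i => (μ {i}).toReal with hadef
  set b : S → ℝ := fun i => (ν {i}).toReal with hbdef
  have ha : ∀ i, 0 ≤ a i := fun i => ENNReal.toReal_nonneg
  have hb : ∀ i, 0 ≤ b i := fun i => ENNReal.toReal_nonneg
  have hμu : (μ Set.univ).toReal = ∑ i, a i := by rw [lp_meas]; simp [hadef]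
  have hνu : (ν Set.univ).toReal = ∑ i, b i := by rw [lp_meas]; simp [hbdef]
  have hab : ∑ i, b i ≤ ∑ i, a i := by
    rw [← hμu, ← hνu]
    exact ENNReal.toReal_mono (measure_ne_top _ _) hmass
  have weak : ∀ (A : Set S) (x : S → S → ℝ), (∀ i j, 0 ≤ x i j) → (∀ j, ∑ i, x i j = b j) →
      (∀ i, ∑ j, x i j ≤ a i) →
      (∑ i, ∑ j, if dist i j ≤ ε then x i j else 0) ≤
        ∑ i, a i - ((μ A).toReal - (ν (closedThicken ε A)).toReal) := by
    intro A x hx hc hr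
    rw [lp_meas μ A, lp_meas ν (closedThicken ε A)]
    have e1 : ∑ i, a i - (∑ i, if i ∈ A then a i else 0) = ∑ i, if i ∈ A then 0 else a i := by
      rw [← Finset.sum_sub_distrib]
      exact Finset.sum_congr rfl fun i _ => by split_ifs <;> simp
    have e2 : (∑ i, if i ∈ A then 0 else ∑ j, x i j) ≤ ∑ i, if i ∈ A then 0 else a i :=
      Finset.sum_le_sum fun i _ => by split_ifs <;> simp [hr]
    have e3 : (∑ j, if j ∈ closedThicken ε A then b j else 0)
        = ∑ i, ∑ j, if j ∈ closedThicken ε A then x i j else 0 := by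
      rw [Finset.sum_comm]
      exact Finset.sum_congr rfl fun j _ => by split_ifs <;> simp [hc]
    have e4 : (∑ i, ∑ j, if dist i j ≤ ε then x i j else 0) ≤
        (∑ i, if i ∈ A then 0 else ∑ j, x i j) +
          ∑ i, ∑ j, if j ∈ closedThicken ε A then x i j else 0 := by
      rw [← Finset.sum_add_distrib]
      refine Finset.sum_le_sum fun i _ => ?_
      by_cases hi : i ∈ A
      · simp only [hi, if_true, zero_add]
        refine Finset.sum_le_sum fun j _ => ?_
        by_cases hd : dist i j ≤ ε
        · have : j ∈ closedThicken ε A := ⟨i, hi, hd⟩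
          simp [hd, this]
        · simp only [hd, if_false]
          split_ifs <;> simp [hx]
      · simp only [hi, if_false]
        rw [← Finset.sum_add_distrib]
        refine Finset.sum_le_sum fun j _ => ?_
        have := hx i j
        split_ifs <;> linarith
    change _ ≤ ∑ i, a i - ((∑ i, if i ∈ A then a i else 0) -
      (∑ j, if j ∈ closedThicken ε A then b j else 0))
    linarith
  obtain ⟨y, y1, y2, y3, y4, A, hA, hN⟩ := lp_flow a b ha hb (fun i j => dist i j ≤ ε)
  obtain ⟨x, x1, x2, x3⟩ := lp_complete a b hab y y1 y3 y4
  have x0 : ∀ i j, 0 ≤ x i j := fun i j => (y1 i j).trans (x1 i j)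
  have strong : ∑ i, a i - ((μ A).toReal - (ν (closedThicken ε A)).toReal) ≤
      (∑ i, ∑ j, if dist i j ≤ ε then x i j else 0) := by
    rw [lp_meas μ A, lp_meas ν (closedThicken ε A)]
    have e1 : ∑ i, a i - (∑ i, if i ∈ A then a i else 0)
        = ∑ i, if i ∈ A then 0 else ∑ j, y i j := by
      rw [← Finset.sum_sub_distrib]
      refine Finset.sum_congr rfl fun i _ => ?_
      split_ifs with h
      · simp
      · simp [hA i h]
    have e3 : (∑ j, if j ∈ closedThicken ε A then b j else 0)
        = ∑ i, ∑ j, if j ∈ closedThicken ε A then y i j else 0 := by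
      rw [Finset.sum_comm]
      refine Finset.sum_congr rfl fun j _ => ?_
      split_ifs with h
      · exact (hN j h).1.symm
      · simp
    have e4 : (∑ i, if i ∈ A then 0 else ∑ j, y i j) +
          (∑ i, ∑ j, if j ∈ closedThicken ε A then y i j else 0) ≤
        (∑ i, ∑ j, if dist i j ≤ ε then x i j else 0) := by
      rw [← Finset.sum_add_distrib]
      refine Finset.sum_le_sum fun i _ => ?_
      have hy : ∀ j, y i j ≤ if dist i j ≤ ε then x i j else 0 := by
        intro j
        split_ifs with h
        · exact x1 i j
        · exact (y2 i j h).le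
      by_cases hi : i ∈ A
      · simp only [hi, if_true, zero_add]
        refine Finset.sum_le_sum fun j _ => ?_
        refine le_trans ?_ (hy j)
        split_ifs
        · exact le_rfl
        · exact y1 i j
      · simp only [hi, if_false]
        rw [← Finset.sum_add_distrib]
        refine Finset.sum_le_sum fun j _ => ?_
        refine le_trans ?_ (hy j)
        split_ifs with h
        · simp [(hN j h).2 i hi]
        · simp
    change ∑ i, a i - ((∑ i, if i ∈ A then a i else 0) -
      (∑ j, if j ∈ closedThicken ε A then b j else 0)) ≤ _
    linarith
  have G2 : IsGreatest {r : ℝ | ∃ x : S → S → ℝ,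
          (∀ i j, 0 ≤ x i j) ∧
          (∀ j, ∑ i, x i j = (ν {j}).toReal) ∧
          (∀ i, ∑ j, x i j ≤ (μ {i}).toReal) ∧
          r = ∑ i, ∑ j, if dist i j ≤ ε then x i j else 0}
      (∑ i, ∑ j, if dist i j ≤ ε then x i j else 0) := by
    refine ⟨⟨x, x0, x2, x3, rfl⟩, ?_⟩
    rintro r ⟨z, z0, z2, z3, rfl⟩
    exact (weak A z z0 z2 z3).trans strong
  have G1 : IsGreatest {r : ℝ | ∃ A : Set S,
        r = (μ A).toReal - (ν (closedThicken ε A)).toReal}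
      ((μ A).toReal - (ν (closedThicken ε A)).toReal) := by
    refine ⟨⟨A, rfl⟩, ?_⟩
    rintro r ⟨B, rfl⟩
    have := weak B x x0 x2 x3
    linarith
  have e := weak A x x0 x2 x3
  have g1 := G1.csSup_eq
  have g2 := G2.csSup_eq
  rw [g1, hμu]
  refine Eq.trans ?_ (congrArg (fun t => ∑ i, a i - t) g2.symm)
  linarith

end
end

section
/- Let W be a graphon and let φ = (φ_t)_{t=0}^L be an L-layer MPNN model. Then for every t ∈ {1,…,L} and λ-almost every x ∈ [0,1], the graphon MPNN feature equals the MPNN feature of the 1-WL color of x: h_x^{(t)} = h^{(t)}_{i_{W,t}(x)}. -/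
open MeasureTheory Set

noncomputable section

/-- An MPNN model: dimensions `d t`, an initial feature `φ₀ ∈ ℝ^{d 0}`, and
continuous update functions `φ t : ℝ^{d t} → ℝ^{d (t+1)}`. An `L`-layer model uses
the layers `φ 0, …, φ (L-1)`. -/
structure MPNNModel where
  d : ℕ → ℕ
  φ₀ : EuclideanSpace ℝ (Fin (d 0))
  φ : (t : ℕ) → EuclideanSpace ℝ (Fin (d t)) → EuclideanSpace ℝ (Fin (d (t+1)))
  cont : ∀ t, Continuous (φ t)

/-- MPNN features on iterated degree measures: `h^{(0)}_α = φ₀` and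
`h^{(t+1)}_α = φ_t (∫ h^{(t)}_β dα(β))`. -/
def idmFeat (m : MPNNModel) : (t : ℕ) → M t → EuclideanSpace ℝ (Fin (m.d t))
  | 0, _ => m.φ₀
  | (t+1), α => m.φ t (∫ β, idmFeat m t β ∂(toMeas α))

/-- A graphon: a symmetric measurable kernel `[0,1]² → [0,1]` (here defined on all
of `ℝ²`, with `[0,1]` carrying the Lebesgue measure). -/
structure Graphon where
  W : ℝ → ℝ → ℝ
  symm : ∀ x y, W x y = W y x
  mem : ∀ x y, W x y ∈ Set.Icc (0:ℝ) 1
  meas : Measurable (Function.uncurry W)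

/-- MPNN point features on a graphon kernel. -/
def graphonFeat (m : MPNNModel) (W : ℝ → ℝ → ℝ) :
    (t : ℕ) → ℝ → EuclideanSpace ℝ (Fin (m.d t))
  | 0, _ => m.φ₀
  | (t+1), x => m.φ t (∫ y in Set.Icc (0:ℝ) 1, W x y • graphonFeat m W t y)

/-- The graphon 1-WL maps `i_{W,h} : [0,1] → M h`: `i_{W,h+1}(x)` is the pushforward
along `i_{W,h}` of the measure on `[0,1]` with density `W(x,·)`. -/
def wlMap (W : Graphon) : (h : ℕ) → ℝ → M h
  | 0, _ => ()
  | (h+1), x => ofSub ⟨Measure.map (wlMap W h)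
      ((volume.restrict (Set.Icc (0:ℝ) 1)).withDensity fun y =>
        ENNReal.ofReal (W.W x y)), by
      by_cases hf : AEMeasurable (wlMap W h)
          ((volume.restrict (Set.Icc (0:ℝ) 1)).withDensity fun y =>
            ENNReal.ofReal (W.W x y))
      · rw [Measure.map_apply_of_aemeasurable hf MeasurableSet.univ, Set.preimage_univ,
          withDensity_apply _ MeasurableSet.univ, Measure.restrict_univ]
        calc ∫⁻ y, ENNReal.ofReal (W.W x y) ∂(volume.restrict (Set.Icc (0:ℝ) 1))
            ≤ ∫⁻ _, 1 ∂(volume.restrict (Set.Icc (0:ℝ) 1)) :=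
              lintegral_mono fun y => ENNReal.ofReal_le_one.mpr (W.mem x y).2
          _ ≤ 1 := by simp [Real.volume_Icc]
      · rw [Measure.map_of_not_aemeasurable hf]
        simp⟩

section aux

abbrev lam : Measure ℝ := volume.restrict (Set.Icc (0:ℝ) 1)

def clampI (r : ℝ) : ℝ := max 0 (min 1 r)

lemma clampI_nonneg (r : ℝ) : 0 ≤ clampI r := le_max_left _ _
lemma clampI_le (r : ℝ) : clampI r ≤ 1 := max_le zero_le_one (min_le_left _ _)
lemma clampI_cont : Continuous clampI := by unfold clampI; fun_prop
lemma clampI_lip (r s : ℝ) : |clampI r - clampI s| ≤ |r - s| := by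
  unfold clampI
  refine (abs_max_sub_max_le_max _ _ _ _).trans ?_
  simp only [sub_self, abs_zero]
  refine max_le (abs_nonneg _) ((abs_min_sub_min_le_max _ _ _ _).trans ?_)
  simp
lemma clampI_of_mem {r : ℝ} (h : r ∈ Set.Icc (0:ℝ) 1) : clampI r = r := by
  unfold clampI; rw [min_eq_right h.2, max_eq_right h.1]

instance : IsProbabilityMeasure lam := ⟨by simp [lam]⟩

/-- push-forward of clamped density -/
def pushMeas {h : ℕ} (g : ℝ → M h) (f : ℝ → ℝ) : Measure (M h) :=
  Measure.map g (lam.withDensity fun y => ENNReal.ofReal (clampI (f y)))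

lemma pushMeas_univ {h : ℕ} (g : ℝ → M h) (hg : Measurable g) (f : ℝ → ℝ) :
    pushMeas g f Set.univ ≤ 1 := by
  unfold pushMeas
  rw [Measure.map_apply hg MeasurableSet.univ, Set.preimage_univ,
    withDensity_apply _ MeasurableSet.univ, Measure.restrict_univ]
  calc ∫⁻ y, ENNReal.ofReal (clampI (f y)) ∂lam
      ≤ ∫⁻ _, 1 ∂lam := lintegral_mono fun y => ENNReal.ofReal_le_one.mpr (clampI_le _)
    _ ≤ 1 := by simp

lemma integral_pushMeas {h : ℕ} {E : Type*} [NormedAddCommGroup E] [NormedSpace ℝ E]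
    [SecondCountableTopology E]
    (g : ℝ → M h) (hg : Measurable g) (f : ℝ → ℝ)
    (hf : AEMeasurable f lam) (k : M h → E) (hk : Continuous k) :
    ∫ b, k b ∂(pushMeas g f) = ∫ y, clampI (f y) • k (g y) ∂lam := by
  unfold pushMeas
  rw [integral_map hg.aemeasurable (by
    borelize E
    exact hk.measurable.aestronglyMeasurable)]
  rw [integral_withDensity_eq_integral_toReal_smul₀
    (f := fun y => ENNReal.ofReal (clampI (f y)))
    ((clampI_cont.measurable.comp_aemeasurable hf).ennreal_ofReal)
    (Filter.Eventually.of_forall fun _ => ENNReal.ofReal_lt_top)]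
  refine integral_congr_ae (Filter.Eventually.of_forall fun y => ?_)
  simp only [ENNReal.toReal_ofReal (clampI_nonneg _)]

lemma continuous_to_M {h : ℕ} {X : Type*} [TopologicalSpace X] (F : X → M (h+1))
    (hF : ∀ k : BoundedContinuousFunction (M h) ℝ, Continuous fun x => ∫ b, k b ∂(toMeas (F x))) :
    Continuous F := by
  refine continuous_iInf_rng.2 fun k => continuous_induced_rng.2 ?_
  exact hF k

lemma continuous_integral_M {h : ℕ} (k : BoundedContinuousFunction (M h) ℝ) :
    Continuous fun α : M (h+1) => ∫ b, k b ∂(toMeas α) := by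
  have : @Continuous (M (h+1)) ℝ (⨅ f : BoundedContinuousFunction (M h) ℝ,
    TopologicalSpace.induced (fun μ : SubProb (M h) => ∫ x, f x ∂μ.val) inferInstance) _
      (fun α : M (h+1) => ∫ b, k b ∂(toMeas α)) :=
    continuous_iInf_dom (i := k) continuous_induced_dom
  exact this

def pushL {h : ℕ} (g : ℝ → M h) (hg : Measurable g) (f : Lp ℝ 1 lam) : M (h+1) :=
  ofSub ⟨pushMeas g f, pushMeas_univ g hg f⟩

lemma pushL_cont {h : ℕ} (g : ℝ → M h) (hg : Measurable g) : Continuous (pushL g hg) := by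
  refine continuous_to_M _ fun k => ?_
  have e : ∀ f : Lp ℝ 1 lam, ∫ b, k b ∂(toMeas (pushL g hg f))
      = ∫ y, clampI (f y) • k (g y) ∂lam := fun f =>
    integral_pushMeas g hg f (Lp.aestronglyMeasurable f).aemeasurable k k.continuous
  simp_rw [e]
  have hint : ∀ f : Lp ℝ 1 lam, Integrable (fun y => clampI (f y) • k (g y)) lam := by
    intro f
    refine Integrable.of_bound (C := ‖k‖) ?_ (Filter.Eventually.of_forall fun y => ?_)
    · exact ((clampI_cont.measurable.comp_aemeasurable
        (Lp.aestronglyMeasurable f).aemeasurable).smul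
        (k.continuous.measurable.comp hg).aemeasurable).aestronglyMeasurable
    · rw [norm_smul, Real.norm_of_nonneg (clampI_nonneg _)]
      exact (mul_le_of_le_one_left (norm_nonneg _) (clampI_le _)).trans (k.norm_coe_le_norm _)
  refine (LipschitzWith.of_dist_le_mul (K := ‖k‖₊) fun f f' => ?_).continuous
  rw [dist_eq_norm, ← integral_sub (hint f) (hint f'), dist_eq_norm, L1.norm_eq_integral_norm,
    coe_nnnorm, ← integral_const_mul]
  refine norm_integral_le_of_norm_le ((L1.integrable_coeFn _).norm.const_mul _) ?_
  filter_upwards [Lp.coeFn_sub f f'] with y hy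
  rw [hy, ← sub_smul, norm_smul, mul_comm, Pi.sub_apply]
  exact mul_le_mul (k.norm_coe_le_norm _) (clampI_lip _ _) (norm_nonneg _) (norm_nonneg _)

lemma row_meas (W : Graphon) (x : ℝ) : Measurable (W.W x) :=
  W.meas.comp measurable_prodMk_left

lemma row_int (W : Graphon) (x : ℝ) : Integrable (W.W x) lam :=
  Integrable.of_bound (row_meas W x).aestronglyMeasurable 1
    (Filter.Eventually.of_forall fun y => by
      rw [Real.norm_of_nonneg (W.mem x y).1]; exact (W.mem x y).2)

def rowL (W : Graphon) (x : ℝ) : Lp ℝ 1 lam := (row_int W x).toL1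

lemma rowL_meas (W : Graphon) : @Measurable _ _ _ (borel _) (rowL W) := by
  borelize ↥(Lp ℝ 1 lam)
  haveI : Fact ((1:ENNReal) ≠ ⊤) := ⟨by simp⟩
  have hd : ∀ f : Lp ℝ 1 lam, Measurable fun x => dist (rowL W x) f := by
    intro f
    have : ∀ x, dist (rowL W x) f = ∫ y, ‖W.W x y - f y‖ ∂lam := by
      intro x
      rw [dist_eq_norm, L1.norm_eq_integral_norm]
      refine integral_congr_ae ?_
      filter_upwards [Lp.coeFn_sub (rowL W x) f, (row_int W x).coeFn_toL1] with y h1 h2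
      rw [h1, Pi.sub_apply]; unfold rowL; rw [h2]
    simp_rw [this]
    have : StronglyMeasurable (Function.uncurry fun x y => ‖W.W x y - f y‖) := by
      have h1 : Measurable (Function.uncurry W.W) := W.meas
      have h2 : Measurable (fun p : ℝ × ℝ => f p.2) :=
        (Lp.stronglyMeasurable f).measurable.comp measurable_snd
      exact (h1.sub h2).norm.stronglyMeasurable
    exact this.integral_prod_right.measurable
  refine measurable_of_isOpen fun U hU => ?_
  obtain ⟨s, hs⟩ := TopologicalSpace.isOpen_iUnion_countable
    (fun p : {p : Lp ℝ 1 lam × ℝ // Metric.ball p.1 p.2 ⊆ U} => Metric.ball p.1.1 p.1.2)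
    (fun _ => Metric.isOpen_ball)
  have : U = ⋃ p ∈ s, Metric.ball p.1.1 p.1.2 := by
    rw [hs.2]
    ext z
    simp only [Set.mem_iUnion]
    refine ⟨fun hz => ?_, fun ⟨p, hp⟩ => p.2 hp⟩
    obtain ⟨e, he, hb⟩ := Metric.isOpen_iff.1 hU z hz
    exact ⟨⟨(z, e), hb⟩, Metric.mem_ball_self he⟩
  rw [this, Set.preimage_iUnion₂]
  exact MeasurableSet.biUnion hs.1 fun p _ => measurableSet_lt (hd p.1.1) measurable_const

lemma wlMap_succ (W : Graphon) (h : ℕ) (x : ℝ) :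
    toMeas (wlMap W (h+1) x) = pushMeas (wlMap W h) (W.W x) := by
  unfold pushMeas
  simp_rw [clampI_of_mem (W.mem x _)]
  rfl

lemma toMeas_inj {h : ℕ} {a b : M (h+1)} (e : toMeas a = toMeas b) : a = b := Subtype.ext e

lemma wlMap_meas (W : Graphon) : ∀ h, Measurable (wlMap W h)
  | 0 => measurable_const (a := (() : M 0))
  | (h+1) => by
    have hg := wlMap_meas W h
    have : wlMap W (h+1) = pushL (wlMap W h) hg ∘ rowL W := by
      funext x
      apply toMeas_inj
      rw [wlMap_succ]
      change _ = pushMeas _ _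
      unfold pushMeas
      congr 1
      refine withDensity_congr_ae ?_
      filter_upwards [(row_int W x).coeFn_toL1] with y h2
      unfold rowL; rw [h2]
    rw [this]
    borelize ↥(Lp ℝ 1 lam)
    exact (pushL_cont _ hg).measurable.comp (rowL_meas W)

instance {h : ℕ} (a : M (h+1)) : IsFiniteMeasure (toMeas a) :=
  ⟨lt_of_le_of_lt (toSub a).2 ENNReal.one_lt_top⟩

lemma idmFeat_cont (m : MPNNModel) : ∀ t, Continuous (idmFeat m t) ∧
    ∃ C : ℝ, 0 ≤ C ∧ ∀ a, ‖idmFeat m t a‖ ≤ C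
  | 0 => ⟨continuous_const (y := m.φ₀), ‖m.φ₀‖, norm_nonneg _, fun _ => le_rfl⟩
  | (t+1) => by
    obtain ⟨hc, C, hC0, hC⟩ := idmFeat_cont m t
    have hi : ∀ a : M (t+1), Integrable (idmFeat m t) (toMeas a) := fun a =>
      Integrable.of_bound hc.measurable.aestronglyMeasurable C (Filter.Eventually.of_forall hC)
    constructor
    · refine (m.cont t).comp (f := fun a : M (t+1) => ∫ β, idmFeat m t β ∂(toMeas a)) ?_
      refine (PiLp.continuous_toLp 2 _).comp (f := fun a : M (t+1) => fun i => (∫ β, idmFeat m t β ∂(toMeas a)) i) ?_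
      refine continuous_pi fun i => ?_
      let P : EuclideanSpace ℝ (Fin (m.d t)) →L[ℝ] ℝ := EuclideanSpace.proj i
      let k : BoundedContinuousFunction (M t) ℝ :=
        BoundedContinuousFunction.ofNormedAddCommGroup (fun b => P (idmFeat m t b))
          (P.continuous.comp hc) (‖P‖ * C)
          (fun b => (P.le_opNorm _).trans (mul_le_mul_of_nonneg_left (hC b) (norm_nonneg _)))
      have e : ∀ a : M (t+1), (∫ β, idmFeat m t β ∂(toMeas a)) i = ∫ b, k b ∂(toMeas a) :=
        fun a => (P.integral_comp_comm (hi a)).symm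
      simp_rw [e]
      exact continuous_integral_M k
    · obtain ⟨D, hD⟩ := ((isCompact_closedBall (0 : EuclideanSpace ℝ (Fin (m.d t))) C).image
        (m.cont t)).isBounded.exists_norm_le
      refine ⟨max D 0, le_max_right _ _, fun a => (hD _ ⟨_, ?_, rfl⟩).trans (le_max_left _ _)⟩
      rw [mem_closedBall_zero_iff]
      refine (norm_integral_le_of_norm_le_const (Filter.Eventually.of_forall hC)).trans ?_
      refine mul_le_of_le_one_right hC0 ?_
      exact ENNReal.toReal_le_of_le_ofReal zero_le_one (by rw [ENNReal.ofReal_one]; exact (toSub a).2)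

lemma feat_eq (W : Graphon) (m : MPNNModel) : ∀ t x,
    graphonFeat m W.W t x = idmFeat m t (wlMap W t x)
  | 0, _ => rfl
  | (t+1), x => by
    simp only [graphonFeat, idmFeat]
    rw [wlMap_succ, integral_pushMeas _ (wlMap_meas W t) _ (row_meas W x).aemeasurable _
      (idmFeat_cont m t).1]
    simp_rw [clampI_of_mem (W.mem x _), feat_eq W m t]

end aux

/-- For every `1 ≤ t ≤ L` and almost every `x ∈ [0,1]`, the graphon MPNN feature of
`x` equals the MPNN feature of the 1-WL color `i_{W,t}(x)`. -/
theorem graphon_feature_eq_idm_feature (W : Graphon) (m : MPNNModel) (L t : ℕ)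
    (ht1 : 1 ≤ t) (htL : t ≤ L) :
    ∀ᵐ x ∂(volume.restrict (Set.Icc (0:ℝ) 1)),
      graphonFeat m W.W t x = idmFeat m t (wlMap W t x) :=
  Filter.Eventually.of_forall fun x => feat_eq W m t x

end
end
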